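/- arXiv:1705.09707 — 2 statements merged into one kernel-verified Lean document; each statement's English description precedes it below -/
import Mathlib

section
/- Let G ↷ (X, μ) be an aperiodic pmp action of a countable group. Then for every ε > 0 there is a Borel set A ⊆ X such that the two-piece partition α = {A, X∖A} satisfies H_μ(α) < ε and every G-invariant Borel set agrees modulo a μ-null set with a set in σ_G(α). -/
open MeasureTheory Set Function
open scoped ENNReal symmDiff

/-- A set in a measurable space is *analytic* if it is the image of a Borel subset of a
standard Borel space under a Borel (measurable) map. -/
def IsAnalyticS {W : Type*} [MeasurableSpace W] (A : Set W) : Prop :=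
  ∃ (Z : Type) (mZ : MeasurableSpace Z), @StandardBorelSpace Z mZ ∧
    ∃ (B : Set Z) (f : Z → W), MeasurableSet[mZ] B ∧ @Measurable Z W mZ _ f ∧ f '' B = A

/-- The smallest `G`-invariant sub-σ-algebra containing the collection `ξ`. -/
def sigmaG (G : Type*) {X : Type*} [Group G] [MulAction G X] (ξ : Set (Set X)) :
    MeasurableSpace X :=
  MeasurableSpace.generateFrom {B | ∃ (g : G), ∃ A ∈ ξ, B = (fun x => g • x) ⁻¹' A}

/-- The σ-algebra of `G`-invariant measurable sets. -/
def invSigma (G X : Type*) [Group G] [MulAction G X] [MeasurableSpace X] :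
    MeasurableSpace X :=
  MeasurableSpace.generateFrom {A | MeasurableSet A ∧ ∀ g : G, (fun x => g • x) ⁻¹' A = A}

/-- Conditional Shannon entropy `H_μ(α | m)` of a countable partition `α` given a
sub-σ-algebra `m`, valued in `[0,∞]`. -/
noncomputable def condEnt {X : Type*} (m : MeasurableSpace X) [mX : MeasurableSpace X]
    (μ : Measure X) {ι : Type*} (α : ι → Set X) : ℝ≥0∞ :=
  ∫⁻ x, ∑' i, ENNReal.ofReal
    (Real.negMulLog ((μ[(α i).indicator (fun _ => (1 : ℝ)) | m]) x)) ∂μ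

/-- Shannon entropy `H_μ(α)` of a countable partition. -/
noncomputable def shEnt {X : Type*} [MeasurableSpace X] (μ : Measure X)
    {ι : Type*} (α : ι → Set X) : ℝ≥0∞ :=
  ∑' i, ENNReal.ofReal (Real.negMulLog (μ (α i)).toReal)

/-- `α` is a countable Borel partition of `X` (indexed by `ℕ`, cells may be empty). -/
def IsPartition {X : Type*} [MeasurableSpace X] (α : ℕ → Set X) : Prop :=
  (∀ i, MeasurableSet (α i)) ∧ Pairwise (Function.onFun Disjoint α) ∧ (⋃ i, α i) = univ

/-- Every set of `ξ` agrees with an `m`-measurable set modulo `μ`-null sets. -/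
def SubsetMod {X : Type*} (m : MeasurableSpace X) [mX : MeasurableSpace X] (μ : Measure X)
    (ξ : Set (Set X)) : Prop :=
  ∀ A ∈ ξ, ∃ B, MeasurableSet[m] B ∧ μ (A ∆ B) = 0

/-- Outer Rokhlin entropy `rh_{G,μ}(ξ | F)`. -/
noncomputable def outerRokhlin (G : Type*) {X : Type*} (ξ : Set (Set X))
    (F : MeasurableSpace X) [Group G] [MulAction G X] [mX : MeasurableSpace X]
    (μ : Measure X) : ℝ≥0∞ :=
  sInf { h | ∃ α : ℕ → Set X, IsPartition α ∧
      SubsetMod (sigmaG G (Set.range α) ⊔ F ⊔ invSigma G X) μ ξ ∧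
      h = condEnt (F ⊔ invSigma G X) μ α }

/-- Rokhlin entropy `rh_G(X, μ | F)`. -/
noncomputable def rokhlin (G : Type*) {X : Type*} (F : MeasurableSpace X) [Group G]
    [MulAction G X] [mX : MeasurableSpace X] (μ : Measure X) : ℝ≥0∞ :=
  outerRokhlin G {A | MeasurableSet A} F μ

/-- Outer Rokhlin entropy `rh_{G,μ}(S | F)` of a sub-σ-algebra `S`. -/
noncomputable def outerRokhlinAlg (G : Type*) {X : Type*} (S F : MeasurableSpace X) [Group G]
    [MulAction G X] [mX : MeasurableSpace X] (μ : Measure X) : ℝ≥0∞ :=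
  outerRokhlin G {A | MeasurableSet[S] A} F μ

/-- The action of `G` on `(X, μ)` is probability-measure-preserving. -/
def IsPmp (G : Type*) {X : Type*} [Group G] [MulAction G X] [MeasurableSpace X]
    (μ : Measure X) : Prop :=
  ∀ g : G, MeasurePreserving (fun x => g • x) μ μ

/-- Aperiodicity: μ-almost-every `G`-orbit is infinite. -/
def Aperiodic (G : Type*) {X : Type*} [Group G] [MulAction G X] [MeasurableSpace X]
    (μ : Measure X) : Prop :=
  ∀ᵐ x ∂μ, (MulAction.orbit G x).Infinite

/-- Ergodicity of a measure: every invariant Borel set is null or conull. -/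
def IsErgodicInv (G : Type*) {X : Type*} [Group G] [MulAction G X] [MeasurableSpace X]
    (ν : Measure X) : Prop :=
  ∀ A : Set X, MeasurableSet A → (∀ g : G, (fun x => g • x) ⁻¹' A = A) → ν A = 0 ∨ ν A = 1

/-- `F` is a `G`-invariant σ-algebra. -/
def InvariantAlg (G : Type*) {X : Type*} (F : MeasurableSpace X) [Group G] [MulAction G X] :
    Prop :=
  ∀ (g : G) (A : Set X), MeasurableSet[F] A → MeasurableSet[F] ((fun x => g • x) ⁻¹' A)

/-- `F` is countably generated. -/
def CountablyGen {X : Type*} (F : MeasurableSpace X) : Prop :=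
  ∃ S : Set (Set X), S.Countable ∧ F = MeasurableSpace.generateFrom S

/-- `π` is an ergodic decomposition map for `μ`. -/
def IsErgDecomp (G : Type*) {X : Type*} [Group G] [MulAction G X] [MeasurableSpace X]
    (μ : Measure X) (π : X → Measure X) : Prop :=
  Measurable π ∧
  (∀ x, IsProbabilityMeasure (π x) ∧ IsPmp G (π x) ∧ IsErgodicInv G (π x)) ∧
  (∀ (g : G) (x : X), π (g • x) = π x) ∧
  (∀ ν : Measure X, IsProbabilityMeasure ν → IsPmp G ν → IsErgodicInv G ν →
      ν {x | π x = ν} = 1) ∧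
  (∀ B : Set X, MeasurableSet B → μ B = ∫⁻ x, π x B ∂μ)

open ProbabilityTheory in
theorem aux_gen {X : Type*} (m : MeasurableSpace X) [mX : MeasurableSpace X] [StandardBorelSpace X]
    (μ : Measure X) [IsProbabilityMeasure μ] (hm : m ≤ mX)
    (δ : ℝ) (hδ : 0 < δ) :
    ∃ φ : X → ℝ, Measurable[m] φ ∧ (∀ x, 0 < φ x ∧ φ x < δ) ∧
      ∀ J, MeasurableSet[m] J → ∃ E, MeasurableSet E ∧ μ (J ∆ (φ ⁻¹' E)) = 0 := by
  have : Nonempty X := μ.nonempty_of_neZero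
  let F := embeddingReal X
  have hF : MeasurableEmbedding F := measurableEmbedding_embeddingReal X
  let ψ : X → (ℚ → ℝ≥0∞) := fun x q => condExpKernel μ m x (F ⁻¹' Iic (q : ℝ))
  have hψ : Measurable[m] ψ := by
    refine @measurable_pi_lambda _ _ _ m _ _ (fun q => ?_)
    exact measurable_condExpKernel (hF.measurable measurableSet_Iic)
  let s : ℝ → ℝ := fun t => δ * Real.sigmoid t
  have hs : MeasurableEmbedding s := by
    refine Measurable.measurableEmbedding (by fun_prop) ?_
    intro a b hab
    have := mul_left_cancel₀ hδ.ne' hab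
    exact Real.sigmoid_injective this
  let e : (ℚ → ℝ≥0∞) → ℝ := fun y => s (embeddingReal (ℚ → ℝ≥0∞) y)
  have he : MeasurableEmbedding e := hs.comp (measurableEmbedding_embeddingReal _)
  refine ⟨fun x => e (ψ x), he.measurable.comp hψ, fun x => ⟨?_, ?_⟩, ?_⟩
  · exact mul_pos hδ (Real.sigmoid_pos _)
  · exact mul_lt_of_lt_one_right hδ (Real.sigmoid_lt_one _)
  intro J hJ
  have hk : Measurable[MeasurableSpace.comap ψ inferInstance]
      (fun x => condExpKernel μ m x) := by
    refine @Measurable.measure_of_isPiSystem_of_isProbabilityMeasure X X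
      (MeasurableSpace.comap ψ inferInstance) mX (fun x => condExpKernel μ m x)
      (fun x => IsMarkovKernel.isProbabilityMeasure (κ := condExpKernel μ m) x)
      (preimage F '' (⋃ a : ℚ, {Iic (a : ℝ)})) ?_ ?_ ?_
    · rw [← MeasurableSpace.comap_generateFrom, ← Real.borel_eq_generateFrom_Iic_rat,
        ← hF.comap_eq, BorelSpace.measurable_eq (α := ℝ)]
    · have := Real.isPiSystem_Iic_rat.comap F
      exact this
    · rintro _ ⟨_, ht, rfl⟩
      obtain ⟨q, rfl⟩ := mem_iUnion.1 ht
      have h1 : Measurable[MeasurableSpace.comap ψ inferInstance] ψ := comap_measurable ψ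
      exact (measurable_pi_apply q).comp h1
  have hk2 : MeasurableSet[MeasurableSpace.comap ψ inferInstance]
      {x | condExpKernel μ m x J = 1} := by
    have : Measurable[MeasurableSpace.comap ψ inferInstance]
      (fun x => condExpKernel μ m x J) := (Measure.measurable_coe (hm _ hJ)).comp hk
    exact this (measurableSet_singleton 1)
  obtain ⟨E, hE, hEe⟩ := hk2
  refine ⟨e '' E, he.measurableSet_image.2 hE, ?_⟩
  have h1 : (fun x => e (ψ x)) ⁻¹' (e '' E) = {x | condExpKernel μ m x J = 1} := by
    rw [← hEe]
    ext x
    simp [he.injective.eq_iff]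
  rw [h1, measure_symmDiff_eq_zero_iff]
  have h2 := condExpKernel_ae_eq_condExp (μ := μ) hm (hm _ hJ)
  have h3 : μ⟦J | m⟧ = J.indicator (fun _ => (1 : ℝ)) :=
    condExp_of_stronglyMeasurable hm (stronglyMeasurable_const.indicator hJ)
      ((integrable_const _).indicator (hm _ hJ))
  rw [h3] at h2
  filter_upwards [h2] with x hx
  apply propext
  change x ∈ J ↔ condExpKernel μ m x J = 1
  by_cases hxJ : x ∈ J
  · simp only [hxJ, indicator_of_mem] at hx
    simp only [hxJ, true_iff]
    rw [measureReal_def, ENNReal.toReal_eq_one_iff] at hx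
    exact hx
  · simp only [hxJ, not_false_eq_true, indicator_of_notMem] at hx
    simp only [hxJ, false_iff]
    intro h
    rw [measureReal_def, h] at hx
    simp at hx

theorem aux_cdf (m : Measure ℝ) [IsProbabilityMeasure m] (hat : ∀ t, m {t} = 0) (c : ℝ)
    (h0 : 0 < c) (h1 : c < 1) : m {t | m (Iic t) ≤ ENNReal.ofReal c} = ENNReal.ofReal c := by
  have hset : {t | m (Iic t) ≤ ENNReal.ofReal c} = {t | ProbabilityTheory.cdf m t ≤ c} := by
    ext t
    simp only [mem_ofPred_eq]
    rw [← ProbabilityTheory.ofReal_cdf, ENNReal.ofReal_le_ofReal_iff h0.le]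
  have hcont : Continuous (ProbabilityTheory.cdf m) := by
    rw [continuous_iff_continuousAt]
    intro t
    rw [(ProbabilityTheory.monotone_cdf m).continuousAt_iff_leftLim_eq_rightLim,
      StieltjesFunction.rightLim_eq]
    have h := (ProbabilityTheory.cdf m).measure_singleton t
    rw [ProbabilityTheory.measure_cdf, hat] at h
    have h' := ENNReal.ofReal_eq_zero.1 h.symm
    have := (ProbabilityTheory.monotone_cdf m).leftLim_le (le_refl t)
    linarith
  obtain ⟨t0, ht0⟩ : ∃ t, ProbabilityTheory.cdf m t = c := by
    obtain ⟨a, ha⟩ := ((ProbabilityTheory.tendsto_cdf_atBot m).eventually_lt_const h0).exists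
    obtain ⟨b, hb⟩ := ((ProbabilityTheory.tendsto_cdf_atTop m).eventually_const_lt h1).exists
    exact mem_range_of_exists_le_of_exists_ge hcont ⟨a, ha.le⟩ ⟨b, hb.le⟩
  rw [hset]
  apply le_antisymm
  · have hbdd : BddAbove {t | ProbabilityTheory.cdf m t ≤ c} := by
      obtain ⟨b, hb⟩ := ((ProbabilityTheory.tendsto_cdf_atTop m).eventually_const_lt h1).exists
      refine ⟨b, fun t ht => ?_⟩
      by_contra hlt
      have := ProbabilityTheory.monotone_cdf m (not_le.1 hlt).le
      have ht' : ProbabilityTheory.cdf m t ≤ c := ht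
      linarith
    have hcl : IsClosed {t | ProbabilityTheory.cdf m t ≤ c} := isClosed_le hcont continuous_const
    have hmem := hcl.csSup_mem ⟨t0, ht0.le⟩ hbdd
    calc m {t | ProbabilityTheory.cdf m t ≤ c}
        ≤ m (Iic (sSup {t | ProbabilityTheory.cdf m t ≤ c})) :=
          measure_mono (fun t ht => le_csSup hbdd ht)
      _ ≤ _ := by
        rw [← ProbabilityTheory.ofReal_cdf]
        exact ENNReal.ofReal_le_ofReal hmem
  · rw [← ht0, ProbabilityTheory.ofReal_cdf]
    exact measure_mono (fun t ht => ProbabilityTheory.monotone_cdf m ht)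

open ProbabilityTheory in
theorem aux_atoms {G X : Type*} [Group G] [Countable G]
    [mX : MeasurableSpace X] [StandardBorelSpace X] [Nonempty X] [MulAction G X]
    (μ : Measure X) [IsProbabilityMeasure μ] (hpmp : IsPmp G μ) (hap : Aperiodic G μ)
    (φ : X → ℝ) (hφ : Measurable φ) (hinv : ∀ (g : G) x, φ (g • x) = φ x) :
    ∀ᵐ a ∂(μ.map φ), ∀ x, condDistrib id φ μ a {x} = 0 := by
  have h1 : ∀ g : G, ∀ᵐ a ∂(μ.map φ),
      (condDistrib id φ μ).map (fun x => g • x) a = condDistrib id φ μ a := by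
    intro g
    have hg := (hpmp g).measurable
    have h2 := condDistrib_comp (μ := μ) (mβ := inferInstance) φ (aemeasurable_id (μ := μ)) hg
    have h3 : condDistrib ((fun x => g • x) ∘ id) φ μ =ᵐ[μ.map φ] condDistrib id φ μ := by
      refine condDistrib_ae_eq_of_measure_eq_compProd φ (by simpa using hg.aemeasurable) ?_
      rw [compProd_map_condDistrib aemeasurable_id]
      conv_rhs => rw [← (hpmp g).map_eq]
      rw [Measure.map_map (by fun_prop) hg]
      congr 1
      ext x <;> simp [hinv]
    filter_upwards [h2, h3] with a h2 h3
    rw [← h2, h3]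
  have h2 : ∀ᵐ a ∂(μ.map φ), ∀ᵐ x ∂(condDistrib id φ μ a), (MulAction.orbit G x).Infinite := by
    have : ∀ᵐ p ∂(μ.map φ ⊗ₘ condDistrib id φ μ), (MulAction.orbit G p.2).Infinite := by
      rw [compProd_map_condDistrib aemeasurable_id]
      have hq : Measure.QuasiMeasurePreserving (Prod.snd : ℝ × X → X)
          (μ.map fun a => (φ a, id a)) μ := by
        refine ⟨measurable_snd, ?_⟩
        rw [Measure.map_map measurable_snd (by fun_prop)]
        have : (Prod.snd ∘ fun a => (φ a, id a)) = (id : X → X) := rfl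
        rw [this, Measure.map_id]
      exact hq.ae hap
    exact Measure.ae_ae_of_ae_compProd this
  filter_upwards [ae_all_iff.2 h1, h2] with a h1 h2 x
  by_contra hx
  set κ := condDistrib id φ μ a with hκ
  have hmass : ∀ g : G, κ {g • x} = κ {x} := by
    intro g
    have h3 := h1 g
    rw [Kernel.map_apply _ (hpmp g).measurable] at h3
    calc κ {g • x} = (κ.map (fun x => g • x)) {g • x} := by rw [h3]
      _ = κ ((fun x => g • x) ⁻¹' {g • x}) :=
        Measure.map_apply (hpmp g).measurable (measurableSet_singleton _)
      _ = κ {x} := by congr 1; ext y; simp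
  have hinf : (MulAction.orbit G x).Infinite := by
    by_contra hfin
    exact hx (measure_mono_null (singleton_subset_iff.2 hfin) (ae_iff.1 h2))
  have := Measure.finite_const_le_meas_of_disjoint_iUnion κ (ε := κ {x}) (pos_iff_ne_zero.2 hx)
    (As := fun y : MulAction.orbit G x => ({y.1} : Set X))
    (fun _ => measurableSet_singleton _) (fun y z hyz => by
      simp only [Function.onFun, disjoint_singleton, ne_eq]
      exact fun h => hyz (Subtype.ext h)) (measure_ne_top _ _)
  have huniv : {i : MulAction.orbit G x | κ {x} ≤ κ ({i.1} : Set X)} = univ := by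
    ext ⟨y, g, hy⟩
    simp only [mem_ofPred_eq, mem_univ, iff_true]
    simp only at hy
    rw [← hy, hmass]
  rw [huniv, Set.finite_univ_iff] at this
  exact hinf this

open ProbabilityTheory in
theorem aux_set {G X : Type*} [Group G] [Countable G]
    [mX : MeasurableSpace X] [StandardBorelSpace X] [MulAction G X]
    (μ : Measure X) [IsProbabilityMeasure μ] (hpmp : IsPmp G μ) (hap : Aperiodic G μ)
    (φ : X → ℝ) (hφ : Measurable φ) (hinv : ∀ (g : G) x, φ (g • x) = φ x)
    (h01 : ∀ x, 0 < φ x ∧ φ x < 1) :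
    ∃ A, MeasurableSet A ∧ ∀ E, MeasurableSet E →
      μ (A ∩ φ ⁻¹' E) = ∫⁻ x in φ ⁻¹' E, ENNReal.ofReal (φ x) ∂μ := by
  have : Nonempty X := μ.nonempty_of_neZero
  let F := embeddingReal X
  have hF : MeasurableEmbedding F := measurableEmbedding_embeddingReal X
  set κ := condDistrib id φ μ with hκ
  have hjoint : Measurable (fun p : ℝ × ℝ => κ p.1 (F ⁻¹' Iic p.2)) := by
    let κ' : Kernel (ℝ × ℝ) X := κ.comap Prod.fst measurable_fst
    have : MeasurableSet {q : (ℝ × ℝ) × X | F q.2 ≤ q.1.2} :=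
      measurableSet_le (hF.measurable.comp measurable_snd) (measurable_snd.comp measurable_fst)
    exact Kernel.measurable_kernel_prodMk_left (κ := κ') this
  let S : Set (ℝ × X) := {p | κ p.1 (F ⁻¹' Iic (F p.2)) ≤ ENNReal.ofReal p.1}
  have hS : MeasurableSet S := by
    refine measurableSet_le ?_ (by fun_prop)
    exact hjoint.comp (measurable_fst.prodMk (hF.measurable.comp measurable_snd))
  have hpair : Measurable (fun x => (φ x, id x)) := by fun_prop
  refine ⟨(fun x => (φ x, id x)) ⁻¹' S, hpair hS, fun E hE => ?_⟩
  have e1 : (fun x => (φ x, id x)) ⁻¹' S ∩ φ ⁻¹' E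
      = (fun x => (φ x, id x)) ⁻¹' (S ∩ Prod.fst ⁻¹' E) := rfl
  have hSE : MeasurableSet (S ∩ Prod.fst ⁻¹' E) := hS.inter (measurable_fst hE)
  rw [e1, ← Measure.map_apply hpair hSE, ← compProd_map_condDistrib aemeasurable_id,
    Measure.compProd_apply hSE, ← setLIntegral_map hE (by fun_prop) hφ, ← lintegral_indicator hE]
  have hrange : ∀ᵐ a ∂(μ.map φ), 0 < a ∧ a < 1 := by
    rw [ae_map_iff hφ.aemeasurable (measurableSet_Ioo (a := (0:ℝ)) (b := 1))]
    exact Filter.Eventually.of_forall h01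
  apply lintegral_congr_ae
  filter_upwards [hrange, aux_atoms μ hpmp hap φ hφ hinv] with a ha hat
  by_cases haE : a ∈ E
  · rw [indicator_of_mem haE]
    have e2 : Prod.mk a ⁻¹' (S ∩ Prod.fst ⁻¹' E)
        = F ⁻¹' {t | (κ a).map F (Iic t) ≤ ENNReal.ofReal a} := by
      ext x
      simp [S, haE, Measure.map_apply hF.measurable measurableSet_Iic]
    have : IsProbabilityMeasure ((κ a).map F) :=
      Measure.isProbabilityMeasure_map hF.measurable.aemeasurable
    rw [e2, ← hF.map_apply]
    refine aux_cdf _ (fun t => ?_) a ha.1 ha.2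
    rw [hF.map_apply]
    have hsub : (F ⁻¹' {t}).Subsingleton := by
      intro x hx y hy
      exact hF.injective (hx.trans hy.symm)
    rcases hsub.eq_empty_or_singleton with h | ⟨x, h⟩
    · rw [h]; simp
    · rw [h]; exact hat x
  · rw [indicator_of_notMem haE]
    have e3 : Prod.mk a ⁻¹' (S ∩ Prod.fst ⁻¹' E) = ∅ := by
      ext x
      simp [haE]
    rw [e3, measure_empty]

/-- The smul map is measurable for `sigmaG` itself. -/
theorem aux_smul_sigmaG {G X : Type*} [Group G] [MulAction G X] (ξ : Set (Set X)) (g : G) :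
    @Measurable X X (sigmaG G ξ) (sigmaG G ξ) (fun x => g • x) := by
  refine @measurable_generateFrom X X (sigmaG G ξ) _ _ ?_
  rintro _ ⟨h, A, hA, rfl⟩
  refine MeasurableSpace.measurableSet_generateFrom ⟨h * g, A, hA, ?_⟩
  ext x
  simp [mul_smul]

theorem aux_integral_mul_condExp {X : Type*} (m : MeasurableSpace X) [mX : MeasurableSpace X]
    (μ : Measure X) [IsProbabilityMeasure μ] (hm : m ≤ mX) (u v : X → ℝ)
    (hu : AEStronglyMeasurable[m] u μ) (hv : Integrable v μ) (huv : Integrable (fun x => u x * v x) μ) :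
    ∫ x, u x * (μ[v | m]) x ∂μ = ∫ x, u x * v x ∂μ := by
  have h := condExp_mul_of_aestronglyMeasurable_left hu huv hv
  rw [← integral_condExp hm (f := fun x => u x * v x)]
  exact integral_congr_ae h.symm

theorem aux_condExp_inv {G X : Type*} (S : MeasurableSpace X) [Group G]
    [mX : MeasurableSpace X] [MulAction G X]
    (μ : Measure X) [IsProbabilityMeasure μ] (hpmp : IsPmp G μ) (hS : S ≤ mX)
    (hSG : ∀ g : G, @Measurable X X S S (fun x => g • x))
    (h : X → ℝ) (hint : Integrable h μ) (hinv : ∀ (g : G) x, h (g • x) = h x) (g : G) :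
    (fun x => (μ[h | S]) (g • x)) =ᵐ[μ] μ[h | S] := by
  have hme : MeasurableEmbedding (fun x : X => g • x) := by
    refine MeasurableEquiv.measurableEmbedding
      ⟨⟨fun x => g • x, fun x => g⁻¹ • x, fun x => by simp, fun x => by simp⟩, ?_, ?_⟩
    · exact (hpmp g).measurable
    · exact (hpmp g⁻¹).measurable
  have hint2 : Integrable (fun x => (μ[h | S]) (g • x)) μ :=
    (hpmp g).integrable_comp_of_integrable integrable_condExp
  refine ae_eq_condExp_of_forall_setIntegral_eq hS hint (fun s _ _ => hint2.integrableOn) ?_ ?_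
  · intro D hD _
    have hD' : MeasurableSet[S] ((fun x : X => g⁻¹ • x) ⁻¹' D) := hSG g⁻¹ hD
    have e : (fun x : X => g • x) ⁻¹' ((fun x : X => g⁻¹ • x) ⁻¹' D) = D := by
      ext x; simp
    have h1 := (hpmp g).setIntegral_preimage_emb hme (μ[h | S]) ((fun x : X => g⁻¹ • x) ⁻¹' D)
    have h2 := (hpmp g).setIntegral_preimage_emb hme h ((fun x : X => g⁻¹ • x) ⁻¹' D)
    rw [e] at h1 h2
    rw [h1, setIntegral_condExp hS hint hD', ← h2]
    simp only [hinv]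
  · exact (stronglyMeasurable_condExp.comp_measurable (hSG g)).aestronglyMeasurable

/-- An almost everywhere invariant function agrees a.e. with an invariant one. -/
theorem aux_ae_inv {G X : Type*} (I : MeasurableSpace X) [Group G] [Countable G]
    [mX : MeasurableSpace X] [MulAction G X]
    (μ : Measure X) [IsProbabilityMeasure μ] (hpmp : IsPmp G μ)
    (hI : ∀ s, MeasurableSet[I] s ↔ MeasurableSet s ∧ ∀ g : G, (fun x => g • x) ⁻¹' s = s)
    (k : X → ℝ) (hk : Measurable k) (hinv : ∀ g : G, (fun x => k (g • x)) =ᵐ[μ] k) :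
    AEStronglyMeasurable[I] k μ := by
  let k' : X → EReal := fun x => ⨆ g : G, (k (g • x) : EReal)
  have hk' : Measurable k' :=
    Measurable.iSup fun g => (hk.comp (hpmp g).measurable).coe_real_ereal
  have hk'inv : ∀ (g : G) x, k' (g • x) = k' x := by
    intro g x
    simp only [k', smul_smul]
    exact (Equiv.mulRight g).iSup_comp (g := fun h : G => (k (h • x) : EReal))
  have hmeas : Measurable[I] k' := by
    intro s hs
    rw [hI]
    refine ⟨hk' hs, fun g => ?_⟩
    ext x
    simp [hk'inv]
  have hmeas2 : Measurable[I] (fun x => (k' x).toReal) := measurable_ereal_toReal.comp hmeas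
  refine ⟨fun x => (k' x).toReal, hmeas2.stronglyMeasurable, ?_⟩
  filter_upwards [ae_all_iff.2 hinv] with x hx
  simp [k', hx]

theorem aux_final {G X : Type*} (I S : MeasurableSpace X) [Group G] [Countable G]
    [mX : MeasurableSpace X] [MulAction G X]
    (μ : Measure X) [IsProbabilityMeasure μ] (hpmp : IsPmp G μ)
    (hI : ∀ s, MeasurableSet[I] s ↔ MeasurableSet s ∧ ∀ g : G, (fun x => g • x) ⁻¹' s = s)
    (hS : S ≤ mX) (hSG : ∀ g : G, @Measurable X X S S (fun x => g • x))
    (A : Set X) (hA : MeasurableSet[S] A)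
    (h : X → ℝ) (hh : Measurable[I] h) (h01 : ∀ x, 0 < h x ∧ h x < 1)
    (hinv : ∀ (g : G) x, h (g • x) = h x)
    (hcond : h =ᵐ[μ] μ[A.indicator (fun _ => (1 : ℝ)) | I]) :
    h =ᵐ[μ] μ[h | S] := by
  have hIle : I ≤ mX := fun s hs => ((hI s).1 hs).1
  have hhm : Measurable h := hh.mono hIle le_rfl
  have hbd : ∀ x, ‖h x‖ ≤ 1 := fun x => by
    rw [Real.norm_eq_abs, abs_of_pos (h01 x).1]; exact (h01 x).2.le
  have hint : Integrable h μ :=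
    Integrable.of_bound hhm.aestronglyMeasurable 1 (Filter.Eventually.of_forall hbd)
  set k := μ[h | S] with hk
  have hkS : StronglyMeasurable[S] k := stronglyMeasurable_condExp
  have hkm : Measurable k := (hkS.mono hS).measurable
  have hkint : Integrable k μ := integrable_condExp
  have hkI : AEStronglyMeasurable[I] k μ :=
    aux_ae_inv I μ hpmp hI k hkm (aux_condExp_inv S μ hpmp hS hSG h hint hinv)
  set f : X → ℝ := A.indicator (fun _ => (1 : ℝ)) with hf
  have hfint : Integrable f μ := (integrable_const _).indicator (hS _ hA)
  have hfS : StronglyMeasurable[S] f := stronglyMeasurable_const.indicator hA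
  have hfbd : ∀ x, ‖f x‖ ≤ 1 := fun x => by
    by_cases hx : x ∈ A <;> simp [f, hx]
  have i1 : Integrable (fun x => k x * h x) μ :=
    hkint.mul_bdd (c := 1) hhm.aestronglyMeasurable (Filter.Eventually.of_forall hbd)
  have i2 : Integrable (fun x => k x * f x) μ :=
    hkint.mul_bdd (c := 1) hfint.aestronglyMeasurable (Filter.Eventually.of_forall hfbd)
  have i3 : Integrable (fun x => h x * f x) μ :=
    hint.mul_bdd (c := 1) hfint.aestronglyMeasurable (Filter.Eventually.of_forall hfbd)
  have i4 : Integrable (fun x => h x * h x) μ :=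
    hint.mul_bdd (c := 1) hhm.aestronglyMeasurable (Filter.Eventually.of_forall hbd)
  have hkbd : ∀ᵐ x ∂μ, ‖k x‖ ≤ 1 := by
    exact ae_bdd_norm_condExp_of_ae_bdd_norm (Filter.Eventually.of_forall hbd)
  have i5 : Integrable (fun x => k x * k x) μ :=
    hkint.mul_bdd (c := 1) hkm.aestronglyMeasurable hkbd
  -- ∫ k k = ∫ k h
  have E1 : ∫ x, k x * k x ∂μ = ∫ x, k x * h x ∂μ :=
    aux_integral_mul_condExp S μ hS k h hkS.aestronglyMeasurable hint i1
  -- ∫ k h = ∫ k f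
  have E2 : ∫ x, k x * h x ∂μ = ∫ x, k x * f x ∂μ := by
    rw [← aux_integral_mul_condExp I μ hIle k f hkI hfint i2]
    refine integral_congr_ae ?_
    filter_upwards [hcond] with x hx
    rw [hx]
  -- ∫ f k = ∫ f h
  have E3 : ∫ x, f x * k x ∂μ = ∫ x, f x * h x ∂μ :=
    aux_integral_mul_condExp S μ hS f h hfS.aestronglyMeasurable hint
      (by simpa only [mul_comm] using i3)
  -- ∫ h h = ∫ h f
  have E4 : ∫ x, h x * h x ∂μ = ∫ x, h x * f x ∂μ := by
    rw [← aux_integral_mul_condExp I μ hIle h f hh.stronglyMeasurable.aestronglyMeasurable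
      hfint i3]
    refine integral_congr_ae ?_
    filter_upwards [hcond] with x hx
    rw [← hx]
  have E0 : ∫ x, (h x - k x) ^ 2 ∂μ = 0 := by
    have : ∀ x, (h x - k x) ^ 2 = (h x * h x - k x * h x) + (k x * k x - k x * h x) := by
      intro x; ring
    simp only [this]
    have E3' : ∫ x, k x * f x ∂μ = ∫ x, h x * f x ∂μ := by
      simpa only [mul_comm] using E3
    have j1 : Integrable (fun x => h x * h x - k x * h x) μ := i4.sub i1
    have j2 : Integrable (fun x => k x * k x - k x * h x) μ := i5.sub i1
    rw [integral_add j1 j2, integral_sub i4 i1, integral_sub i5 i1]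
    linarith
  have i6 : Integrable (fun x => (h x - k x) ^ 2) μ := by
    have : (fun x => (h x - k x) ^ 2)
        = fun x => (h x * h x - k x * h x) + (k x * k x - k x * h x) := by
      funext x; ring
    rw [this]
    exact (i4.sub i1).add (i5.sub i1)
  rw [integral_eq_zero_iff_of_nonneg (fun x => sq_nonneg _) i6] at E0
  filter_upwards [E0] with x hx
  have : h x - k x = 0 := by simpa using hx
  linarith

theorem aux_ent (ε : ℝ) (hε : 0 < ε) : ∃ δ : ℝ, 0 < δ ∧ δ < 1 ∧ ∀ p : ℝ, 0 ≤ p → p ≤ δ →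
    ENNReal.ofReal (Real.negMulLog p) + ENNReal.ofReal (Real.negMulLog (1 - p))
      < ENNReal.ofReal ε := by
  have hc : Continuous fun p : ℝ => Real.negMulLog p + Real.negMulLog (1 - p) := by fun_prop
  have h0 : (fun p : ℝ => Real.negMulLog p + Real.negMulLog (1 - p)) 0 < ε := by simpa using hε
  have hev := hc.continuousAt.eventually_lt_const h0
  obtain ⟨r, hr, hball⟩ := Metric.eventually_nhds_iff.1 hev
  refine ⟨min (r / 2) (1 / 2), by positivity,
    lt_of_le_of_lt (min_le_right _ _) (by norm_num), fun p hp hpd => ?_⟩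
  have h1 : p ≤ r / 2 := hpd.trans (min_le_left _ _)
  have h2 : p ≤ 1 / 2 := hpd.trans (min_le_right _ _)
  rw [← ENNReal.ofReal_add (Real.negMulLog_nonneg hp (by linarith))
    (Real.negMulLog_nonneg (by linarith) (by linarith)), ENNReal.ofReal_lt_ofReal_iff hε]
  apply hball
  rw [Real.dist_eq, sub_zero, abs_of_nonneg hp]
  linarith

theorem aux_core {G X : Type*} (I : MeasurableSpace X) [Group G] [Countable G]
    [mX : MeasurableSpace X] [StandardBorelSpace X] [MulAction G X]
    (μ : Measure X) [IsProbabilityMeasure μ] (hpmp : IsPmp G μ) (hap : Aperiodic G μ)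
    (hI : ∀ s, MeasurableSet[I] s ↔
      MeasurableSet[mX] s ∧ ∀ g : G, (fun x => g • x) ⁻¹' s = s) :
    ∀ ε : ℝ, 0 < ε → ∃ A : Set X, MeasurableSet A ∧
      ENNReal.ofReal (Real.negMulLog (μ A).toReal) +
        ENNReal.ofReal (Real.negMulLog (μ Aᶜ).toReal) < ENNReal.ofReal ε ∧
      ∀ B : Set X, MeasurableSet B → (∀ g : G, (fun x => g • x) ⁻¹' B = B) →
        ∃ C, MeasurableSet[sigmaG G {A, Aᶜ}] C ∧ μ (B ∆ C) = 0 := by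
  intro ε hε
  obtain ⟨δ, hδ0, hδ1, hδ⟩ := aux_ent ε hε
  have hIle : I ≤ mX := fun s hs => ((hI s).1 hs).1
  obtain ⟨φ, hφI, hφr, hφgen⟩ := aux_gen I μ hIle δ hδ0
  have hφ : Measurable[mX] φ := hφI.mono hIle le_rfl
  have hinv : ∀ (g : G) x, φ (g • x) = φ x := by
    intro g x
    have h1 := ((hI _).1 (hφI (measurableSet_singleton (φ x)))).2 g
    have h2 : x ∈ (fun x => g • x) ⁻¹' (φ ⁻¹' {φ x}) := by rw [h1]; simp
    simpa using h2
  have h01 : ∀ x, 0 < φ x ∧ φ x < 1 := fun x => ⟨(hφr x).1, (hφr x).2.trans hδ1⟩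
  obtain ⟨A, hA, hAE⟩ := aux_set μ hpmp hap φ hφ hinv h01
  have hint : Integrable φ μ :=
    Integrable.of_bound hφ.aestronglyMeasurable 1 (Filter.Eventually.of_forall fun x => by
      rw [Real.norm_eq_abs, abs_of_pos (h01 x).1]; exact (h01 x).2.le)
  have hfint : Integrable (A.indicator (fun _ => (1 : ℝ))) μ := (integrable_const _).indicator hA
  refine ⟨A, hA, ?_, ?_⟩
  · have hle : μ A ≤ ENNReal.ofReal δ := by
      have := hAE univ MeasurableSet.univ
      simp only [preimage_univ, inter_univ, Measure.restrict_univ] at this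
      rw [this]
      calc ∫⁻ x, ENNReal.ofReal (φ x) ∂μ ≤ ∫⁻ _, ENNReal.ofReal δ ∂μ :=
            lintegral_mono fun x => ENNReal.ofReal_le_ofReal (hφr x).2.le
        _ = ENNReal.ofReal δ := by simp
    have hc : (μ Aᶜ).toReal = 1 - (μ A).toReal := probReal_compl_eq_one_sub hA
    rw [hc]
    exact hδ _ ENNReal.toReal_nonneg (ENNReal.toReal_le_of_le_ofReal hδ0.le hle)
  · have hS : sigmaG G {A, Aᶜ} ≤ mX := by
      refine MeasurableSpace.generateFrom_le ?_
      rintro _ ⟨g, B, hB, rfl⟩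
      rcases hB with rfl | hB
      · exact (hpmp g).measurable hA
      · rw [mem_singleton_iff] at hB
        rw [hB]
        exact (hpmp g).measurable hA.compl
    have hAS : MeasurableSet[sigmaG G {A, Aᶜ}] A :=
      MeasurableSpace.measurableSet_generateFrom ⟨1, A, by simp, by simp⟩
    have hcond : φ =ᵐ[μ] μ[A.indicator (fun _ => (1 : ℝ)) | I] := by
      refine ae_eq_condExp_of_forall_setIntegral_eq hIle hfint
        (fun s _ _ => hint.integrableOn) ?_ hφI.stronglyMeasurable.aestronglyMeasurable
      intro J hJ _
      obtain ⟨E, hE, hJE⟩ := hφgen J hJ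
      have hae : J =ᵐ[μ] (φ ⁻¹' E : Set X) := measure_symmDiff_eq_zero_iff.1 hJE
      rw [setIntegral_congr_set hae, setIntegral_congr_set hae, integral_indicator_const _ hA,
        measureReal_def, Measure.restrict_apply hA, hAE E hE, smul_eq_mul, mul_one]
      exact integral_eq_lintegral_of_nonneg_ae
        (Filter.Eventually.of_forall fun x => (h01 x).1.le) hφ.aestronglyMeasurable
    have key := aux_final I (sigmaG G {A, Aᶜ}) μ hpmp hI hS (aux_smul_sigmaG _) A hAS φ hφI h01
      hinv hcond
    intro B hB hBinv
    obtain ⟨E, hE, hBE⟩ := hφgen B ((hI B).2 ⟨hB, hBinv⟩)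
    refine ⟨(μ[φ | sigmaG G {A, Aᶜ}]) ⁻¹' E,
      (stronglyMeasurable_condExp (m := sigmaG G {A, Aᶜ})).measurable hE, ?_⟩
    rw [measure_symmDiff_eq_zero_iff] at hBE ⊢
    refine hBE.trans ?_
    filter_upwards [key] with x hx
    apply propext
    change φ x ∈ E ↔ (μ[φ | sigmaG G {A, Aᶜ}]) x ∈ E
    rw [← hx]

/-- Corollary 3.8: for an aperiodic pmp action, there are two-piece
partitions of arbitrarily small Shannon entropy over which all invariant sets are
measurable modulo null sets. -/
theorem statement5 {G X : Type*} [Group G] [Countable G]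
    [mX : MeasurableSpace X] [StandardBorelSpace X] [MulAction G X]
    (μ : Measure X) [IsProbabilityMeasure μ] (hpmp : IsPmp G μ) (hap : Aperiodic G μ) :
    ∀ ε : ℝ, 0 < ε → ∃ A : Set X, MeasurableSet A ∧
      ENNReal.ofReal (Real.negMulLog (μ A).toReal) +
        ENNReal.ofReal (Real.negMulLog (μ Aᶜ).toReal) < ENNReal.ofReal ε ∧
      ∀ B : Set X, MeasurableSet B → (∀ g : G, (fun x => g • x) ⁻¹' B = B) →
        ∃ C, MeasurableSet[sigmaG G {A, Aᶜ}] C ∧ μ (B ∆ C) = 0 := by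
  refine aux_core (⨅ g : G, MeasurableSpace.invariants (fun x : X => g • x)) μ hpmp hap ?_
  intro s
  simp only [MeasurableSpace.measurableSet_iInf, MeasurableSpace.measurableSet_invariants]
  exact ⟨fun h => ⟨(h 1).1, fun g => (h g).2⟩, fun h g => ⟨h.1, h.2 g⟩⟩
end

section
/- Let G ↷ (X, μ) be a pmp action of a countable group, let ξ be a countable collection of Borel subsets of X, let F be a countably generated G-invariant sub-σ-algebra, and suppose x ↦ π_x is an ergodic decomposition map for μ with τ = π_*μ. Then rh_{G,μ}(ξ | F) = ∫ rh_{G,ν}(ξ | F) dτ(ν), where the integrand agrees τ-almost-everywhere with a Borel function and the integral is valued in [0, ∞]. -/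
open MeasureTheory Set Function
open scoped ENNReal symmDiff

section Analytic
open Filter Topology

theorem R8.exists_closed_subset_range {Y : Type*} [TopologicalSpace Y]
    [TopologicalSpace.MetrizableSpace Y] [MeasurableSpace Y] [BorelSpace Y]
    (τ : Measure Y) [IsFiniteMeasure τ] (φ : (ℕ → ℕ) → Y) (hφ : Continuous φ)
    {ε : ℝ≥0∞} (hε : ε ≠ 0) :
    ∃ K ⊆ range φ, MeasurableSet K ∧ τ (range φ) ≤ τ K + ε := by
  obtain ⟨δ, δpos, hδ⟩ := ENNReal.exists_pos_sum_of_countable' hε ℕ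
  have key : ∀ (k : ℕ) (S : Set (ℕ → ℕ)), ∃ N : ℕ,
      τ (φ '' S) ≤ τ (φ '' (S ∩ {x | x k ≤ N})) + δ k := by
    intro k S
    have hmono : Monotone (fun N : ℕ => φ '' (S ∩ {x | x k ≤ N})) := by
      intro a b hab
      apply image_mono
      rintro x ⟨h1, h2⟩
      exact ⟨h1, le_trans h2 hab⟩
    have hU : φ '' S = ⋃ N : ℕ, φ '' (S ∩ {x | x k ≤ N}) := by
      rw [← image_iUnion, ← inter_iUnion]
      congr 1
      ext x
      simp only [mem_inter_iff, mem_iUnion, mem_ofPred_eq]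
      exact ⟨fun h => ⟨h, x k, le_rfl⟩, fun h => h.1⟩
    have := hmono.measure_iUnion (μ := τ)
    rw [← hU] at this
    by_contra hcon
    push Not at hcon
    have h2 : τ (φ '' S) + δ k ≤ τ (φ '' S) := by
      conv_rhs => rw [this]
      rw [this, ENNReal.iSup_add]
      apply iSup_le
      intro N
      rw [← this]
      exact (hcon N).le
    have h3 := ENNReal.lt_add_right (measure_ne_top τ (φ '' S)) (δpos k).ne'
    exact absurd h2 (not_le.2 h3)
  choose N hN using key
  let S : ℕ → Set (ℕ → ℕ) := fun k => Nat.rec univ (fun k T => T ∩ {x | x k ≤ N k T}) k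
  have hS : ∀ k, S (k+1) = S k ∩ {x | x k ≤ N k (S k)} := fun k => rfl
  let n : ℕ → ℕ := fun k => N k (S k)
  have hSmem : ∀ k x, x ∈ S k ↔ ∀ i < k, x i ≤ n i := by
    intro k
    induction k with
    | zero => intro x; simp [S]
    | succ k ih =>
      intro x
      rw [hS, mem_inter_iff, ih]
      constructor
      · rintro ⟨h1, h2⟩ i hi
        rcases Nat.lt_succ_iff_lt_or_eq.1 hi with h | h
        · exact h1 i h
        · subst h; exact h2
      · intro h
        exact ⟨fun i hi => h i (by omega), h k (by omega)⟩
  have hSle : ∀ k, τ (range φ) ≤ τ (φ '' S k) + ∑ i ∈ Finset.range k, δ i := by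
    intro k
    induction k with
    | zero => simp [S]
    | succ k ih =>
      refine ih.trans ?_
      rw [Finset.sum_range_succ, hS, add_comm _ (δ k), ← add_assoc]
      gcongr
      exact hN k (S k)
  letI := TopologicalSpace.metrizableSpaceMetric Y
  refine ⟨⋂ k, closure (φ '' S k), ?_, MeasurableSet.iInter fun k => isClosed_closure.measurableSet, ?_⟩
  · intro y hy
    rw [mem_iInter] at hy
    have : ∀ k : ℕ, ∃ x ∈ S k, dist y (φ x) < 1 / ((k : ℝ) + 1) := by
      intro k
      obtain ⟨z, ⟨x, hx, rfl⟩, hz⟩ := Metric.mem_closure_iff.1 (hy k) (1 / ((k : ℝ) + 1)) (by positivity)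
      exact ⟨x, hx, hz⟩
    choose x hx hd using this
    have hK : IsCompact (Set.pi univ fun i => Set.Iic (n i)) :=
      isCompact_univ_pi fun i => (Set.finite_Iic (n i)).isCompact
    obtain ⟨a, -, ψ, hψ, hlim⟩ := hK.tendsto_subseq (x := fun k i => min (x k i) (n i))
      (fun k i _ => mem_Iic.2 (min_le_right _ _))
    have hlim2 : Tendsto (fun k => x (ψ k)) atTop (𝓝 a) := by
      rw [tendsto_pi_nhds] at hlim ⊢
      intro i
      refine (hlim i).congr' ?_
      filter_upwards [eventually_gt_atTop i] with k hk
      have := (hSmem _ _).1 (hx (ψ k)) i (lt_of_lt_of_le hk (hψ.id_le k))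
      simp [this]
    have h1 : Tendsto (fun k => φ (x (ψ k))) atTop (𝓝 (φ a)) := (hφ.tendsto a).comp hlim2
    have h2 : Tendsto (fun k => φ (x k)) atTop (𝓝 y) := by
      rw [tendsto_iff_dist_tendsto_zero]
      refine squeeze_zero (fun _ => dist_nonneg) (fun k => ?_) (tendsto_one_div_add_atTop_nhds_zero_nat (𝕜 := ℝ))
      rw [dist_comm]
      exact (hd k).le
    exact ⟨a, tendsto_nhds_unique h1 (h2.comp hψ.tendsto_atTop)⟩
  · have hanti : Antitone (fun k => closure (φ '' S k)) := by
      apply antitone_nat_of_succ_le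
      intro k
      apply closure_mono
      apply image_mono
      rw [hS]
      exact inter_subset_left
    rw [hanti.measure_iInter (fun k => isClosed_closure.measurableSet.nullMeasurableSet)
      ⟨0, measure_ne_top _ _⟩, ENNReal.iInf_add]
    apply le_iInf
    intro k
    refine (hSle k).trans ?_
    gcongr
    · exact subset_closure
    · exact (ENNReal.sum_le_tsum _).trans hδ.le

theorem R8.nullMeasurable_range {Y : Type*} [TopologicalSpace Y]
    [TopologicalSpace.MetrizableSpace Y] [MeasurableSpace Y] [BorelSpace Y]
    (τ : Measure Y) [IsFiniteMeasure τ] (φ : (ℕ → ℕ) → Y) (hφ : Continuous φ) :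
    NullMeasurableSet (range φ) τ := by
  have h : ∀ n : ℕ, ∃ K ⊆ range φ, MeasurableSet K ∧ τ (range φ) ≤ τ K + ((n : ℝ≥0∞) + 1)⁻¹ :=
    fun n => R8.exists_closed_subset_range τ φ hφ (by simp)
  choose K hK hKm hKle using h
  have hUm : MeasurableSet (⋃ n, K n) := MeasurableSet.iUnion hKm
  have hle : τ (range φ) ≤ τ (⋃ n, K n) := by
    have : ∀ n : ℕ, τ (range φ) ≤ τ (⋃ n, K n) + ((n : ℝ≥0∞) + 1)⁻¹ := fun n =>
      (hKle n).trans (by gcongr; exact subset_iUnion K n)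
    have hl : Tendsto (fun n : ℕ => τ (⋃ n, K n) + ((n : ℝ≥0∞) + 1)⁻¹) atTop (𝓝 (τ (⋃ n, K n) + 0)) := by
      apply Tendsto.add tendsto_const_nhds
      have := (tendsto_add_atTop_iff_nat 1).2 ENNReal.tendsto_inv_nat_nhds_zero
      simpa using this
    rw [add_zero] at hl
    exact ge_of_tendsto' hl this
  exact hUm.nullMeasurableSet.congr
    (ae_eq_of_subset_of_measure_ge (iUnion_subset hK) hle hUm.nullMeasurableSet (measure_ne_top _ _))

theorem R8.nullMeasurable_analytic {Y : Type*} [TopologicalSpace Y]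
    [TopologicalSpace.MetrizableSpace Y] [MeasurableSpace Y] [BorelSpace Y]
    (τ : Measure Y) [IsFiniteMeasure τ] {s : Set Y} (hs : AnalyticSet s) :
    NullMeasurableSet s τ := by
  rw [AnalyticSet] at hs
  rcases hs with rfl | ⟨φ, hφ, rfl⟩
  · exact MeasurableSet.empty.nullMeasurableSet
  · exact R8.nullMeasurable_range τ φ hφ

theorem R8.exists_section {Y : Type*} [TopologicalSpace Y]
    [TopologicalSpace.MetrizableSpace Y] [MeasurableSpace Y] [BorelSpace Y]
    (τ : Measure Y) [IsFiniteMeasure τ] (φ : (ℕ → ℕ) → Y) (hφ : Continuous φ) :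
    ∃ s : Y → (ℕ → ℕ), Measurable s ∧ ∀ᵐ y ∂τ, y ∈ range φ → φ (s y) = y := by
  classical
  let W : List ℕ → Set Y := fun l => φ '' {x | PiNat.res x l.length = l}
  have hclosed : ∀ l : List ℕ, IsClosed {x : ℕ → ℕ | PiNat.res x l.length = l} := by
    intro l
    have hc : ∀ n : ℕ, Continuous (fun x : ℕ → ℕ => (fun i : Fin n => x i)) := fun n => by fun_prop
    by_cases hne : ∃ z : ℕ → ℕ, PiNat.res z l.length = l
    · obtain ⟨z, hz⟩ := hne
      have : {x : ℕ → ℕ | PiNat.res x l.length = l} = ⋂ i ∈ Finset.range l.length, {x | x i = z i} := by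
        ext x
        simp only [mem_ofPred_eq, Finset.mem_range, mem_iInter]
        conv_lhs => rhs; rw [← hz]
        rw [PiNat.res_eq_res]
      rw [this]
      exact isClosed_biInter fun i _ => isClosed_eq (continuous_apply i) continuous_const
    · push Not at hne
      have : {x : ℕ → ℕ | PiNat.res x l.length = l} = ∅ := by ext x; simp [hne x]
      rw [this]; exact isClosed_empty
  have hW : ∀ l, NullMeasurableSet (W l) τ := by
    intro l
    apply R8.nullMeasurable_analytic
    exact ((hclosed l).analyticSet).image_of_continuous hφ
  choose W' hW' hWW' using fun l => (hW l).exists_measurable_superset_ae_eq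
  have hae : ∀ᵐ y ∂τ, ∀ l, (y ∈ W' l ↔ y ∈ W l) := by
    rw [ae_all_iff]
    intro l
    filter_upwards [(hWW' l).2] with y hy
    exact Iff.of_eq hy
  have hW'm : ∀ l, MeasurableSet (W' l) := fun l => (hWW' l).1
  let N : List ℕ → Y → ℕ := fun l y => sInf {k | y ∈ W' (k :: l)}
  letI : MeasurableSpace (List ℕ) := ⊤
  haveI : DiscreteMeasurableSpace (List ℕ) := ⟨fun _ => trivial⟩
  have hN : ∀ l, Measurable (N l) := by
    intro l
    have hle : ∀ k, MeasurableSet {y | ∃ j, j ≤ k ∧ y ∈ W' (j :: l)} := by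
      intro k
      have : {y | ∃ j, j ≤ k ∧ y ∈ W' (j :: l)} = ⋃ j : ℕ, ⋃ (_ : j ≤ k), W' (j :: l) := by
        ext y; simp
      rw [this]
      exact MeasurableSet.iUnion fun j => MeasurableSet.iUnion fun _ => hW'm _
    have hex : MeasurableSet {y | ∃ j, y ∈ W' (j :: l)} := by
      have : {y | ∃ j, y ∈ W' (j :: l)} = ⋃ j : ℕ, W' (j :: l) := by
        ext y; simp
      rw [this]
      exact MeasurableSet.iUnion fun j => hW'm _
    apply measurable_of_Iic
    intro k
    have : N l ⁻¹' Iic k = {y | ∃ j, j ≤ k ∧ y ∈ W' (j :: l)} ∪ {y | ∃ j, y ∈ W' (j :: l)}ᶜ := by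
      ext y
      simp only [N, mem_preimage, mem_Iic, mem_union, mem_ofPred_eq, mem_compl_iff]
      constructor
      · intro h
        by_cases hy : ∃ j, y ∈ W' (j :: l)
        · left
          exact ⟨_, h, Nat.sInf_mem (s := {k | y ∈ W' (k :: l)}) hy⟩
        · right; exact hy
      · rintro (⟨j, hj, hy⟩ | h)
        · exact (Nat.sInf_le (s := {k | y ∈ W' (k :: l)}) hy).trans hj
        · have : {k | y ∈ W' (k :: l)} = ∅ := by
            ext k; simp only [mem_ofPred_eq, mem_empty_iff_false, iff_false]
            exact fun hk => h ⟨k, hk⟩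
          rw [this]; simp
    rw [this]
    exact (hle k).union hex.compl
  let L : ℕ → Y → List ℕ := fun n => Nat.rec (fun _ => []) (fun _ f y => N (f y) y :: f y) n
  have hLs : ∀ n y, L (n+1) y = N (L n y) y :: L n y := fun _ _ => rfl
  have hNu : Measurable (fun q : List ℕ × Y => N q.1 q.2) :=
    measurable_from_prod_countable_right fun l => hN l
  have hL : ∀ n, Measurable (L n) := by
    intro n
    induction n with
    | zero => exact measurable_const
    | succ n ih =>
      have : L (n+1) = (fun q : ℕ × List ℕ => q.1 :: q.2) ∘
          (fun y => (N (L n y) y, L n y)) := rfl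
      rw [this]
      exact (measurable_of_countable _).comp ((hNu.comp (ih.prodMk measurable_id)).prodMk ih)
  let s : Y → ℕ → ℕ := fun y n => N (L n y) y
  have hres : ∀ n y, PiNat.res (s y) n = L n y := by
    intro n y
    induction n with
    | zero => rfl
    | succ n ih => rw [PiNat.res_succ, ih]
  refine ⟨s, measurable_pi_lambda _ fun n => hNu.comp ((hL n).prodMk measurable_id), ?_⟩
  filter_upwards [hae] with y hy hyr
  have hmem : ∀ n, y ∈ W (L n y) := by
    intro n
    induction n with
    | zero =>
      obtain ⟨x, rfl⟩ := hyr
      exact ⟨x, rfl, rfl⟩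
    | succ n ih =>
      obtain ⟨x, hx, hxy⟩ := ih
      have h1 : y ∈ W (x n :: L n y) := by
        refine ⟨x, ?_, hxy⟩
        have hl : (L n y).length = n := by rw [← hres, PiNat.res_length]
        simp only [mem_ofPred_eq, List.length_cons, hl] at hx ⊢
        rw [PiNat.res_succ, hx]
      have h2 : N (L n y) y ∈ {k | y ∈ W' (k :: L n y)} :=
        Nat.sInf_mem ⟨x n, (hy _).2 h1⟩
      rw [hLs]
      exact (hy _).1 h2
  choose x hx hxy using hmem
  have hlim : Tendsto x atTop (𝓝 (s y)) := by
    rw [tendsto_pi_nhds]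
    intro i
    apply tendsto_const_nhds.congr'
    filter_upwards [eventually_gt_atTop i] with n hn
    have h := hx n
    rw [mem_ofPred_eq, ← hres, PiNat.res_length, PiNat.res_eq_res] at h
    exact (h hn).symm
  have h1 := (hφ.tendsto (s y)).comp hlim
  have h2 : φ ∘ x = fun _ => y := funext hxy
  rw [h2] at h1
  exact tendsto_nhds_unique h1 tendsto_const_nhds

/-- Jankov and von Neumann selection, almost everywhere version. -/
theorem R8.selection {Y P : Type*} [TopologicalSpace Y]
    [TopologicalSpace.MetrizableSpace Y] [MeasurableSpace Y] [BorelSpace Y]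
    [TopologicalSpace P] [MeasurableSpace P] [BorelSpace P]
    [TopologicalSpace.PseudoMetrizableSpace P] [Nonempty P]
    (τ : Measure Y) [IsFiniteMeasure τ] {E : Set (Y × P)} (hE : AnalyticSet E) :
    ∃ p : Y → P, Measurable p ∧ ∀ᵐ y ∂τ, (∃ q, (y, q) ∈ E) → (y, p y) ∈ E := by
  rw [AnalyticSet] at hE
  rcases hE with rfl | ⟨φ, hφ, rfl⟩
  · exact ⟨fun _ => Classical.arbitrary P, measurable_const, by simp⟩
  · obtain ⟨s, hs, h⟩ := R8.exists_section τ (fun x => (φ x).1) (continuous_fst.comp hφ)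
    refine ⟨fun y => (φ (s y)).2, ?_, ?_⟩
    · exact (continuous_snd.comp hφ).measurable.comp hs
    · filter_upwards [h] with y hy
      rintro ⟨q, x, hx⟩
      refine ⟨s y, ?_⟩
      have := hy ⟨x, by simp [hx]⟩
      exact Prod.ext this rfl
end Analytic


section Prob
open Filter Topology ProbabilityTheory

theorem R8.coding {X : Type*} [MeasurableSpace X] [MeasurableSpace.CountablyGenerated X] :
    ∃ c : (ℕ → ℕ → ℕ) → X → ℕ, Measurable (fun q : (ℕ → ℕ → ℕ) × X => c q.1 q.2) ∧
      ∀ (ν : Measure X) [IsFiniteMeasure ν] (f : X → ℕ), Measurable f → ∃ p, c p =ᵐ[ν] f := by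
  classical
  let C := generateSetAlgebra (MeasurableSpace.countableGeneratingSet X)
  have hCc : C.Countable :=
    countable_generateSetAlgebra (MeasurableSpace.countable_countableGeneratingSet)
  have hCa : IsSetAlgebra C := isSetAlgebra_generateSetAlgebra
  have hCg : ‹MeasurableSpace X› = MeasurableSpace.generateFrom C := by
    rw [generateFrom_generateSetAlgebra_eq, MeasurableSpace.generateFrom_countableGeneratingSet]
  obtain ⟨e, he⟩ := hCc.exists_eq_range ⟨∅, hCa.empty_mem⟩
  have hem : ∀ j, MeasurableSet (e j) := by
    intro j
    have : e j ∈ C := by rw [he]; exact mem_range_self j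
    rw [hCg]
    exact MeasurableSpace.measurableSet_generateFrom this
  let U : (ℕ → ℕ) → Set X := fun q => {x | ∀ n : ℕ, ∃ k, n ≤ k ∧ x ∈ e (q k)}
  have hUm : ∀ i : ℕ, MeasurableSet {w : (ℕ → ℕ → ℕ) × X | w.2 ∈ U (w.1 i)} := by
    intro i
    have : {w : (ℕ → ℕ → ℕ) × X | w.2 ∈ U (w.1 i)} =
        ⋂ n : ℕ, ⋃ k : ℕ, ⋃ (_ : n ≤ k), ⋃ j : ℕ,
          ((fun w : (ℕ → ℕ → ℕ) × X => w.1 i k) ⁻¹' {j} ∩ Prod.snd ⁻¹' (e j)) := by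
      ext w
      simp [U]
    rw [this]
    refine MeasurableSet.iInter fun n => MeasurableSet.iUnion fun k => MeasurableSet.iUnion fun _ =>
      MeasurableSet.iUnion fun j => MeasurableSet.inter ?_ (measurable_snd (hem j))
    have : Measurable (fun w : (ℕ → ℕ → ℕ) × X => w.1 i k) := by fun_prop
    exact this (measurableSet_singleton j)
  let c : (ℕ → ℕ → ℕ) → X → ℕ := fun p x => sInf {i | x ∈ U (p i)}
  refine ⟨c, ?_, ?_⟩
  · apply measurable_of_Iic
    intro k
    have : (fun q : (ℕ → ℕ → ℕ) × X => c q.1 q.2) ⁻¹' Iic k =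
        (⋃ j : ℕ, ⋃ (_ : j ≤ k), {w : (ℕ → ℕ → ℕ) × X | w.2 ∈ U (w.1 j)}) ∪
        (⋃ j : ℕ, {w : (ℕ → ℕ → ℕ) × X | w.2 ∈ U (w.1 j)})ᶜ := by
      ext w
      rw [mem_preimage, mem_Iic, mem_union, mem_compl_iff]
      simp only [mem_iUnion, mem_ofPred_eq, exists_prop, c]
      constructor
      · intro h
        by_cases hy : ∃ j, w.2 ∈ U (w.1 j)
        · left
          exact ⟨_, h, Nat.sInf_mem (s := {i | w.2 ∈ U (w.1 i)}) hy⟩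
        · right; exact hy
      · rintro (⟨j, hj, hy⟩ | h)
        · exact (Nat.sInf_le (s := {i | w.2 ∈ U (w.1 i)}) hy).trans hj
        · have : {i | w.2 ∈ U (w.1 i)} = ∅ := by
            ext k; simp only [mem_ofPred_eq, mem_empty_iff_false, iff_false]
            exact fun hk => h ⟨k, hk⟩
          rw [this]; simp
    rw [this]
    exact (MeasurableSet.iUnion fun j => MeasurableSet.iUnion fun _ => hUm j).union
      (MeasurableSet.iUnion fun j => hUm j).compl
  · intro ν _ f hf
    have hset : ∀ A : Set X, MeasurableSet A → ∃ q : ℕ → ℕ, ∀ᵐ x ∂ν, (x ∈ U q ↔ x ∈ A) := by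
      intro A hA
      have h1 : ∀ k : ℕ, ∃ j, ν (e j ∆ A) < (1/2 : ℝ≥0∞)^k := by
        intro k
        obtain ⟨t, ht, hlt⟩ := exists_measure_symmDiff_lt_of_generateFrom_isSetRing (μ := ν)
          hCa.isSetRing ⟨{univ}, countable_singleton _, by
            simpa using hCa.univ_mem, by simp⟩ hCg hA (ε := (1/2 : ℝ≥0∞)^k)
            (ENNReal.pow_pos (by simp) k)
        rw [he] at ht
        obtain ⟨j, rfl⟩ := ht
        exact ⟨j, hlt⟩
      choose q hq using h1
      refine ⟨q, ?_⟩
      have hsum : ∑' k, ν (e (q k) ∆ A) ≠ ∞ := by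
        refine ne_top_of_le_ne_top ?_ (ENNReal.tsum_le_tsum fun k => (hq k).le)
        rw [ENNReal.tsum_geometric]
        simp
      filter_upwards [ae_eventually_notMem hsum] with x hx
      obtain ⟨n0, hn0⟩ := eventually_atTop.1 hx
      have hiff : ∀ n ≥ n0, (x ∈ e (q n) ↔ x ∈ A) := by
        intro n hn
        have := hn0 n hn
        rw [mem_symmDiff] at this
        tauto
      constructor
      · intro h
        obtain ⟨k, hk, hxk⟩ := h n0
        exact (hiff k hk).1 hxk
      · intro h n
        exact ⟨max n n0, le_max_left _ _, (hiff _ (le_max_right _ _)).2 h⟩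
    choose p hp using fun i : ℕ => hset (f ⁻¹' {i}) (hf (measurableSet_singleton i))
    refine ⟨p, ?_⟩
    filter_upwards [ae_all_iff.2 hp] with x hx
    have : {i | x ∈ U (p i)} = {f x} := by
      ext i
      rw [mem_ofPred_eq, hx i, mem_preimage, mem_singleton_iff, mem_singleton_iff, eq_comm]
    simp only [c]
    rw [this]
    simp

theorem R8.condK {T X Γ : Type*} [MeasurableSpace T] [mX : MeasurableSpace X]
    [mΓ : MeasurableSpace Γ] [MeasurableSpace.CountablyGenerated Γ]
    (κ : Kernel T X) [IsMarkovKernel κ] (θ : T → X → Γ)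
    (hθ : Measurable (fun q : T × X => θ q.1 q.2))
    (f : T → X → ℕ) (hf : Measurable (fun q : T × X => f q.1 q.2)) :
    ∃ D : T × Γ → ℕ → ℝ, (∀ i, Measurable (fun q => D q i)) ∧
      (∀ q i, 0 ≤ D q i ∧ D q i ≤ 1) ∧ ∀ t i, (κ t)[((f t) ⁻¹' {i}).indicator (fun _ => (1 : ℝ)) | mΓ.comap (θ t)] =ᵐ[κ t]
        fun x => D (t, θ t x) i := by
  classical
  let κ' : Kernel T (Γ × ℕ) := (Kernel.id ×ₖ κ).map (fun q : T × X => (θ q.1 q.2, f q.1 q.2))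
  have hm : Measurable (fun q : T × X => (θ q.1 q.2, f q.1 q.2)) := hθ.prodMk hf
  haveI : IsMarkovKernel κ' := Kernel.IsMarkovKernel.map _ hm
  have hθt : ∀ t, Measurable (θ t) := fun t => hθ.comp measurable_prodMk_left
  have hft : ∀ t, Measurable (f t) := fun t => hf.comp measurable_prodMk_left
  have hκ' : ∀ t, κ' t = (κ t).map (fun x => (θ t x, f t x)) := by
    intro t
    simp only [κ']
    rw [Kernel.map_apply _ hm, Kernel.prod_apply, Kernel.id_apply, Measure.dirac_prod,
      Measure.map_map hm measurable_prodMk_left]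
    rfl
  let K := κ'.condKernel
  have hdis : κ'.fst ⊗ₖ K = κ' := κ'.disintegrate K
  have hfst : ∀ t, κ'.fst t = (κ t).map (θ t) := by
    intro t
    rw [Kernel.fst_apply, hκ', Measure.map_map measurable_fst ((hθt t).prodMk (hft t))]
    rfl
  refine ⟨fun q i => (K q {i}).toReal, fun i => ?_, fun q i => ⟨ENNReal.toReal_nonneg,
    ENNReal.toReal_le_of_le_ofReal zero_le_one (by simpa using prob_le_one)⟩, ?_⟩
  · exact (K.measurable_coe (measurableSet_singleton i)).ennreal_toReal
  intro t i
  have hmle : mΓ.comap (θ t) ≤ mX := (hθt t).comap_le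
  have hKm : Measurable (fun q : T × Γ => K q {i}) := K.measurable_coe (measurableSet_singleton i)
  have hKtm : Measurable (fun y : Γ => K (t, y) {i}) := hKm.comp measurable_prodMk_left
  have hfi : MeasurableSet ((f t) ⁻¹' {i}) := hft t (measurableSet_singleton i)
  have hbound : ∀ x, ‖(K (t, θ t x) {i}).toReal‖ ≤ 1 := by
    intro x
    rw [Real.norm_of_nonneg ENNReal.toReal_nonneg]
    exact ENNReal.toReal_le_of_le_ofReal zero_le_one (by simpa using prob_le_one)
  have hintg : Integrable (fun x => (K (t, θ t x) {i}).toReal) (κ t) := by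
    refine Integrable.of_bound ?_ 1 (Eventually.of_forall hbound)
    exact ((hKtm.comp (hθt t)).ennreal_toReal).aestronglyMeasurable
  symm
  refine ae_eq_condExp_of_forall_setIntegral_eq hmle ?_ ?_ ?_ ?_
  · exact (integrable_const 1).indicator hfi
  · intro s _ _
    exact hintg.integrableOn
  · rintro s ⟨A, hA, rfl⟩ -
    have hAm : MeasurableSet (θ t ⁻¹' A) := hθt t hA
    rw [integral_indicator_const _ hfi]
    have h2 : ∫ x in θ t ⁻¹' A, (K (t, θ t x) {i}).toReal ∂(κ t) =
        (∫⁻ x in θ t ⁻¹' A, K (t, θ t x) {i} ∂(κ t)).toReal :=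
      integral_toReal (hKtm.comp (hθt t)).aemeasurable
        (Eventually.of_forall fun x => measure_lt_top _ _)
    refine Eq.trans h2 ?_
    have h1 : κ' t (A ×ˢ {i}) = ∫⁻ y in A, K (t, y) {i} ∂(κ'.fst t) := by
      conv_lhs => rw [← hdis]
      exact Kernel.compProd_apply_prod hA (measurableSet_singleton i)
    rw [hfst, setLIntegral_map hA hKtm (hθt t), hκ',
      Measure.map_apply ((hθt t).prodMk (hft t)) (hA.prod (measurableSet_singleton i))] at h1
    rw [← h1]
    simp [Measure.real, Measure.restrict_apply hfi, inter_comm, mk_preimage_prod]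
  · refine StronglyMeasurable.aestronglyMeasurable ?_
    refine Measurable.stronglyMeasurable ?_
    exact (hKtm.ennreal_toReal).comp (comap_measurable (θ t))

theorem R8.condExp_enlarge {X : Type*} (m m' : MeasurableSpace X) [mX : MeasurableSpace X]
    (ν : Measure X) [IsProbabilityMeasure ν] (h1 : m ≤ m') (h2 : m' ≤ mX)
    (h3 : m' ≤ eventuallyMeasurableSpace m (ae ν)) (f : X → ℝ) (hf : Integrable f ν) :
    ν[f | m'] =ᵐ[ν] ν[f | m] := by
  symm
  refine ae_eq_condExp_of_forall_setIntegral_eq h2 hf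
    (fun s _ _ => integrable_condExp.integrableOn) ?_ ?_
  · intro s hs _
    obtain ⟨t, ht, hst⟩ := h3 s hs
    rw [setIntegral_congr_set hst, setIntegral_congr_set hst]
    exact setIntegral_condExp (h1.trans h2) hf ht
  · exact (stronglyMeasurable_condExp.mono h1).aestronglyMeasurable

theorem R8.subset_iff_condExp {X : Type*} (m : MeasurableSpace X) [mX : MeasurableSpace X]
    (ν : Measure X) [IsProbabilityMeasure ν] (hm : m ≤ mX)
    (A : Set X) :
    (∃ B, MeasurableSet[m] B ∧ ν (A ∆ B) = 0) ↔
      ν[A.indicator (fun _ => (1 : ℝ)) | m] =ᵐ[ν] A.indicator (fun _ => (1 : ℝ)) := by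
  constructor
  · rintro ⟨B, hB, h⟩
    have hAB : A =ᵐ[ν] B := measure_symmDiff_eq_zero_iff.1 h
    have h1 : A.indicator (fun _ => (1 : ℝ)) =ᵐ[ν] B.indicator (fun _ => (1 : ℝ)) :=
      indicator_ae_eq_of_ae_eq_set hAB
    have h2 : ν[B.indicator (fun _ => (1 : ℝ)) | m] = B.indicator (fun _ => (1 : ℝ)) :=
      condExp_of_stronglyMeasurable hm (stronglyMeasurable_const.indicator hB)
        ((integrable_const 1).indicator (hm B hB))
    refine (condExp_congr_ae h1).trans ?_
    rw [h2]
    exact h1.symm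
  · intro h
    refine ⟨{x | (ν[A.indicator (fun _ => (1 : ℝ)) | m]) x = 1}, ?_, ?_⟩
    · exact stronglyMeasurable_condExp.measurable (measurableSet_singleton (1 : ℝ))
    · rw [measure_symmDiff_eq_zero_iff]
      filter_upwards [h] with x hx
      apply propext
      change x ∈ A ↔ x ∈ {x | (ν[A.indicator (fun _ => (1 : ℝ)) | m]) x = 1}
      rw [mem_ofPred_eq, hx]
      by_cases hxA : x ∈ A <;> simp [hxA]

end Prob

section Erg
open Filter Topology ProbabilityTheory

theorem R8.iota (X : Type*) [MeasurableSpace X] [MeasurableSpace.CountablyGenerated X] :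
    ∃ j : Measure X → (ℕ → ℝ≥0∞), Measurable j ∧
      ∀ ν ν' : Measure X, IsProbabilityMeasure ν → IsProbabilityMeasure ν' → j ν = j ν' → ν = ν' := by
  let C := generateSetAlgebra (MeasurableSpace.countableGeneratingSet X)
  have hCc : C.Countable :=
    countable_generateSetAlgebra (MeasurableSpace.countable_countableGeneratingSet)
  have hCa : IsSetAlgebra C := isSetAlgebra_generateSetAlgebra
  have hCg : ‹MeasurableSpace X› = MeasurableSpace.generateFrom C := by
    rw [generateFrom_generateSetAlgebra_eq, MeasurableSpace.generateFrom_countableGeneratingSet]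
  obtain ⟨e, he⟩ := hCc.exists_eq_range ⟨∅, hCa.empty_mem⟩
  have hem : ∀ j, MeasurableSet (e j) := by
    intro j
    have : e j ∈ C := by rw [he]; exact mem_range_self j
    rw [hCg]
    exact MeasurableSpace.measurableSet_generateFrom this
  refine ⟨fun ν k => ν (e k), measurable_pi_lambda _ fun k => Measure.measurable_coe (hem k), ?_⟩
  intro ν ν' h h' heq
  refine MeasureTheory.ext_of_generate_finite C hCg hCa.isSetRing.isSetSemiring.isPiSystem ?_ (by simp)
  intro s hs
  rw [he] at hs
  obtain ⟨k, rfl⟩ := hs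
  exact congrFun heq k

theorem R8.comap_theta {G X Γ : Type*} [Group G] [MulAction G X] [mΓ : MeasurableSpace Γ]
    (f : X → ℕ) (φ : X → Γ) :
    sigmaG G (range fun i => f ⁻¹' {i}) ⊔ mΓ.comap φ =
      MeasurableSpace.comap (fun x => (φ x, fun g : G => f (g • x))) inferInstance := by
  apply le_antisymm
  · apply sup_le
    · apply MeasurableSpace.generateFrom_le
      rintro B ⟨g, A, ⟨i, rfl⟩, rfl⟩
      refine ⟨{q | q.2 g = i}, ?_, rfl⟩
      have : Measurable (fun q : Γ × (G → ℕ) => q.2 g) := by fun_prop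
      exact this (measurableSet_singleton i)
    · rintro s ⟨A, hA, rfl⟩
      exact ⟨Prod.fst ⁻¹' A, measurable_fst hA, rfl⟩
  · have h1 : Measurable[sigmaG G (range fun i => f ⁻¹' {i}) ⊔ mΓ.comap φ] φ := by
      intro s hs
      exact (le_sup_right : mΓ.comap φ ≤ sigmaG G (range fun i => f ⁻¹' {i}) ⊔ mΓ.comap φ) _
        ⟨s, hs, rfl⟩
    have h2 : Measurable[sigmaG G (range fun i => f ⁻¹' {i}) ⊔ mΓ.comap φ]
        (fun x => fun g : G => f (g • x)) := by
      refine @measurable_pi_lambda _ _ _ (sigmaG G (range fun i => f ⁻¹' {i}) ⊔ mΓ.comap φ) _ _ fun g => ?_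
      refine @measurable_to_countable' _ _ _ _ (sigmaG G (range fun i => f ⁻¹' {i}) ⊔ mΓ.comap φ) _ fun i => ?_
      refine (le_sup_left : sigmaG G (range fun i => f ⁻¹' {i}) ≤ sigmaG G (range fun i => f ⁻¹' {i}) ⊔ mΓ.comap φ) _ ?_
      exact MeasurableSpace.measurableSet_generateFrom ⟨g, _, ⟨i, rfl⟩, rfl⟩
    exact (h1.prodMk h2).comap_le

theorem R8.invSigma_le {G X : Type*} [Group G] [MulAction G X] [mX : MeasurableSpace X] :
    invSigma G X ≤ mX :=
  MeasurableSpace.generateFrom_le fun _ h => h.1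

theorem R8.ergodic_le {G X : Type*} (m : MeasurableSpace X) [Group G] [MulAction G X]
    [mX : MeasurableSpace X] (ν : Measure X) [IsProbabilityMeasure ν] (hν : IsErgodicInv G ν) :
    m ⊔ invSigma G X ≤ eventuallyMeasurableSpace m (ae ν) := by
  apply sup_le
  · exact le_eventuallyMeasurableSpace
  · apply MeasurableSpace.generateFrom_le
    rintro A ⟨hA, hinv⟩
    rcases hν A hA hinv with h | h
    · exact ⟨∅, @MeasurableSet.empty _ m, ae_eq_empty.2 h⟩
    · refine ⟨univ, @MeasurableSet.univ _ m, ?_⟩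
      rw [ae_eq_univ, prob_compl_eq_zero_iff hA]
      exact h

theorem R8.subsetMod_erg {G X : Type*} (m : MeasurableSpace X) [Group G] [MulAction G X]
    [mX : MeasurableSpace X] (ν : Measure X) [IsProbabilityMeasure ν] (hν : IsErgodicInv G ν)
    (ξ : Set (Set X)) : SubsetMod (m ⊔ invSigma G X) ν ξ ↔ SubsetMod m ν ξ := by
  constructor
  · intro h A hA
    obtain ⟨B, hB, hAB⟩ := h A hA
    obtain ⟨B', hB', hBB'⟩ := R8.ergodic_le m ν hν B hB
    refine ⟨B', hB', ?_⟩
    rw [measure_symmDiff_eq_zero_iff] at hAB ⊢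
    exact hAB.trans hBB'
  · intro h A hA
    obtain ⟨B, hB, hAB⟩ := h A hA
    exact ⟨B, (le_sup_left : m ≤ m ⊔ invSigma G X) _ hB, hAB⟩

/-- The entropy function of a (sub)probability vector. -/
noncomputable def R8.eta (d : ℕ → ℝ) : ℝ≥0∞ := ∑' i, ENNReal.ofReal (Real.negMulLog (d i))

theorem R8.measurable_eta {T : Type*} [MeasurableSpace T] (D : T → ℕ → ℝ)
    (hD : ∀ i, Measurable (fun t => D t i)) : Measurable (fun t => R8.eta (D t)) := by
  unfold R8.eta
  exact Measurable.tsum fun i =>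
    (Real.continuous_negMulLog.measurable.comp (hD i)).ennreal_ofReal

theorem R8.condEnt_eq {X : Type*} (m : MeasurableSpace X) [mX : MeasurableSpace X] (ν : Measure X)
    (α : ℕ → Set X) (d : X → ℕ → ℝ)
    (h : ∀ i, ν[(α i).indicator (fun _ => (1 : ℝ)) | m] =ᵐ[ν] fun x => d x i) :
    condEnt m ν α = ∫⁻ x, R8.eta (d x) ∂ν := by
  unfold condEnt R8.eta
  apply lintegral_congr_ae
  filter_upwards [ae_all_iff.2 h] with x hx
  simp only [hx]

theorem R8.condEnt_congr {X : Type*} (m : MeasurableSpace X) [mX : MeasurableSpace X]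
    (ν : Measure X) (f f' : X → ℕ) (h : f =ᵐ[ν] f') :
    condEnt m ν (fun i => f ⁻¹' {i}) = condEnt m ν (fun i => f' ⁻¹' {i}) := by
  rw [R8.condEnt_eq m ν (fun i => f ⁻¹' {i}) _ (fun i => EventuallyEq.rfl)]
  symm
  apply R8.condEnt_eq
  intro i
  apply condExp_congr_ae
  apply indicator_ae_eq_of_ae_eq_set
  filter_upwards [h] with x hx
  apply propext
  change x ∈ f' ⁻¹' {i} ↔ x ∈ f ⁻¹' {i}
  simp [hx]

theorem R8.subsetMod_congr {G X Γ : Type*} [Group G] [Countable G] [MulAction G X]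
    [mX : MeasurableSpace X] [mΓ : MeasurableSpace Γ] (ν : Measure X) (hp : IsPmp G ν)
    (φ : X → Γ) (f f' : X → ℕ) (h : f =ᵐ[ν] f') (ξ : Set (Set X))
    (hs : SubsetMod (sigmaG G (range fun i => f ⁻¹' {i}) ⊔ mΓ.comap φ) ν ξ) :
    SubsetMod (sigmaG G (range fun i => f' ⁻¹' {i}) ⊔ mΓ.comap φ) ν ξ := by
  rw [R8.comap_theta] at hs ⊢
  intro A hA
  obtain ⟨_, ⟨B, hB, rfl⟩, hAB⟩ := hs A hA
  refine ⟨_, ⟨B, hB, rfl⟩, ?_⟩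
  rw [measure_symmDiff_eq_zero_iff] at hAB ⊢
  refine hAB.trans ?_
  have : ∀ᵐ x ∂ν, ∀ g : G, f (g • x) = f' (g • x) := by
    rw [ae_all_iff]
    intro g
    exact (hp g).quasiMeasurePreserving.ae h
  filter_upwards [this] with x hx
  apply propext
  change (φ x, fun g : G => f (g • x)) ∈ B ↔ (φ x, fun g : G => f' (g • x)) ∈ B
  simp only [hx]

theorem R8.exists_fun {X : Type*} [MeasurableSpace X] (α : ℕ → Set X) (hα : IsPartition α) :
    ∃ f : X → ℕ, Measurable f ∧ α = fun i => f ⁻¹' {i} := by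
  obtain ⟨hm, hd, hu⟩ := hα
  have hex : ∀ x, ∃ i, x ∈ α i := fun x => by
    have : x ∈ ⋃ i, α i := by rw [hu]; trivial
    simpa using this
  choose f hf using hex
  have h : α = fun i => f ⁻¹' {i} := by
    funext i
    ext x
    rw [mem_preimage, mem_singleton_iff]
    constructor
    · intro hx
      by_contra hne
      exact (Set.disjoint_left.1 (hd hne)) (hf x) hx
    · rintro rfl
      exact hf x
  refine ⟨f, measurable_to_countable' fun i => ?_, h⟩
  have := hm i
  rw [h] at this
  exact this

theorem R8.isPartition_fun {X : Type*} [MeasurableSpace X] (f : X → ℕ) (hf : Measurable f) :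
    IsPartition (fun i => f ⁻¹' {i}) := by
  refine ⟨fun i => hf (measurableSet_singleton i), ?_, ?_⟩
  · intro i j hij
    refine Set.disjoint_left.2 fun x hx hx' => hij ?_
    rw [mem_preimage, mem_singleton_iff] at hx hx'
    rw [← hx, hx']
  · ext x
    simp

/-- Probability measures, with the measurable structure of `Measure X`. -/
abbrev R8.M (X : Type*) [MeasurableSpace X] := {ν : Measure X // IsProbabilityMeasure ν}

/-- The tautological kernel. -/
noncomputable def R8.kM (X : Type*) [MeasurableSpace X] : Kernel (R8.M X) X :=
  ⟨Subtype.val, measurable_subtype_coe⟩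

theorem R8.kM_apply (X : Type*) [MeasurableSpace X] (ν : R8.M X) : R8.kM X ν = ν.1 := rfl

instance R8.kM_markov (X : Type*) [MeasurableSpace X] : IsMarkovKernel (R8.kM X) :=
  ⟨fun ν => ν.2⟩

theorem R8.ent {G T X Γ : Type*} [Group G] [MulAction G X] [MeasurableSpace T]
    [mX : MeasurableSpace X]
    [mΓ : MeasurableSpace Γ] [MeasurableSpace.CountablyGenerated Γ]
    (κ : Kernel T X) [IsMarkovKernel κ] (φ : X → Γ) (hφ : Measurable φ)
    (f : T → X → ℕ) (hf : Measurable (fun q : T × X => f q.1 q.2)) :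
    ∃ D : T × Γ → ℕ → ℝ, (∀ i, Measurable (fun q => D q i)) ∧
      (∀ q i, 0 ≤ D q i ∧ D q i ≤ 1) ∧ ∀ t, IsErgodicInv G (κ t) → ∀ i,
        (κ t)[((f t) ⁻¹' {i}).indicator (fun _ => (1 : ℝ)) | mΓ.comap φ ⊔ invSigma G X] =ᵐ[κ t]
        fun x => D (t, φ x) i := by
  obtain ⟨D, h1, h2, h3⟩ := R8.condK κ (fun _ => φ) (hφ.comp measurable_snd) f hf
  refine ⟨D, h1, h2, fun t ht i => ?_⟩
  refine EventuallyEq.trans ?_ (h3 t i)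
  refine R8.condExp_enlarge _ _ _ le_sup_left (sup_le hφ.comap_le R8.invSigma_le)
    (R8.ergodic_le _ _ ht) _ ?_
  have : Measurable (f t) := hf.comp measurable_prodMk_left
  exact (integrable_const 1).indicator (this (measurableSet_singleton i))

end Erg

section Glob
open Filter Topology ProbabilityTheory

theorem R8.pi_ae {G X : Type*} [Group G] [MulAction G X] [mX : MeasurableSpace X]
    [MeasurableSpace.CountablyGenerated X]
    (μ : Measure X) (π : X → Measure X) (hπ : IsErgDecomp G μ π) (x : X) :
    ∀ᵐ y ∂(π x), π y = π x := by
  obtain ⟨hm, hp, -, h1, -⟩ := hπ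
  obtain ⟨j, hj, hinj⟩ := R8.iota X
  obtain ⟨hpx, hpm, her⟩ := hp x
  have hset : {y | π y = π x} = (fun y => j (π y)) ⁻¹' {j (π x)} := by
    ext y
    rw [mem_preimage, mem_singleton_iff, mem_ofPred_eq]
    exact ⟨fun h => by rw [h], fun h => hinj _ _ (hp y).1 hpx h⟩
  have hms : MeasurableSet {y | π y = π x} := by
    rw [hset]
    exact (hj.comp hm) (measurableSet_singleton _)
  have := (prob_compl_eq_zero_iff hms).2 (h1 (π x) hpx hpm her)
  exact this

theorem R8.pi_inv {G X : Type*} [Group G] [MulAction G X] [mX : MeasurableSpace X]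
    (μ : Measure X) (π : X → Measure X) (hπ : IsErgDecomp G μ π) :
    @Measurable _ _ (invSigma G X) _ π := by
  obtain ⟨hm, hp, hinv, -, -⟩ := hπ
  intro s hs
  refine MeasurableSpace.measurableSet_generateFrom ⟨hm hs, fun g => ?_⟩
  ext x
  simp [hinv]

theorem R8.lint {G X : Type*} [Group G] [MulAction G X] [mX : MeasurableSpace X]
    (μ : Measure X) (π : X → Measure X) (hπ : IsErgDecomp G μ π)
    (f : X → ℝ≥0∞) (hf : Measurable f) :
    ∫⁻ x, f x ∂μ = ∫⁻ x, ∫⁻ y, f y ∂(π x) ∂μ := by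
  obtain ⟨hm, hp, hinv, -, hB⟩ := hπ
  have : μ = μ.bind π := by
    ext s hs
    rw [Measure.bind_apply hs hm.aemeasurable, hB s hs]
  conv_lhs => rw [this]
  exact Measure.lintegral_bind hm.aemeasurable hf.aemeasurable

theorem R8.glob_condExp {G X Γ : Type*} [Group G] [MulAction G X] [mX : MeasurableSpace X]
    [MeasurableSpace.CountablyGenerated X] [mΓ : MeasurableSpace Γ]
    (μ : Measure X) [IsProbabilityMeasure μ] (π : X → Measure X) (hπ : IsErgDecomp G μ π)
    (φ : X → Γ) (hφ : Measurable φ)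
    (A : Set X) (hA : MeasurableSet A) (g : X → ℝ)
    (hg : @Measurable _ _ (mΓ.comap φ ⊔ invSigma G X) _ g)
    (hg01 : ∀ x, 0 ≤ g x ∧ g x ≤ 1)
    (h : ∀ x, (π x)[A.indicator (fun _ => (1 : ℝ)) | mΓ.comap φ ⊔ invSigma G X] =ᵐ[π x] g) :
    μ[A.indicator (fun _ => (1 : ℝ)) | mΓ.comap φ ⊔ invSigma G X] =ᵐ[μ] g := by
  have hle : mΓ.comap φ ⊔ invSigma G X ≤ mX := sup_le hφ.comap_le R8.invSigma_le
  have hgm : Measurable g := hg.mono hle le_rfl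
  have hintg : ∀ (ν : Measure X) [IsProbabilityMeasure ν], Integrable g ν := by
    intro ν _
    refine Integrable.of_bound hgm.aestronglyMeasurable 1 (Eventually.of_forall fun x => ?_)
    rw [Real.norm_of_nonneg (hg01 x).1]
    exact (hg01 x).2
  symm
  refine ae_eq_condExp_of_forall_setIntegral_eq hle ((integrable_const 1).indicator hA)
    (fun s _ _ => (hintg μ).integrableOn) ?_ hg.stronglyMeasurable.aestronglyMeasurable
  intro s hs _
  have hsm := hle s hs
  have key : ∫⁻ x in s, ENNReal.ofReal (g x) ∂μ = μ (s ∩ A) := by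
    rw [← lintegral_indicator hsm, R8.lint μ π hπ _ (hgm.ennreal_ofReal.indicator hsm),
      hπ.2.2.2.2 _ (hsm.inter hA)]
    apply lintegral_congr
    intro x
    haveI := (hπ.2.1 x).1
    rw [lintegral_indicator hsm, ← ofReal_integral_eq_lintegral_ofReal (hintg _).integrableOn
      (Eventually.of_forall fun x => (hg01 x).1)]
    have h1 : ∫ y in s, g y ∂(π x) = ∫ y in s, A.indicator (fun _ => (1 : ℝ)) y ∂(π x) := by
      refine Eq.trans (setIntegral_congr_ae hsm ((h x).symm.mono fun y hy _ => hy))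
        (setIntegral_condExp (μ := π x) (f := A.indicator (fun _ => (1 : ℝ))) hle
          ((integrable_const (1 : ℝ)).indicator hA) hs)
    rw [h1, integral_indicator_const _ hA]
    simp [Measure.real, Measure.restrict_apply hA, inter_comm]
  rw [integral_eq_lintegral_of_nonneg_ae (Eventually.of_forall fun x => (hg01 x).1)
    hgm.aestronglyMeasurable, key, integral_indicator_const _ hA]
  simp [Measure.real, Measure.restrict_apply hA, inter_comm]

theorem R8.glob_ent {G X Γ : Type*} [Group G] [MulAction G X] [mX : MeasurableSpace X]
    [MeasurableSpace.CountablyGenerated X] [mΓ : MeasurableSpace Γ]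
    [MeasurableSpace.CountablyGenerated Γ]
    (μ : Measure X) [IsProbabilityMeasure μ] (π : X → Measure X) (hπ : IsErgDecomp G μ π)
    (φ : X → Γ) (hφ : Measurable φ) (f : X → ℕ) (hf : Measurable f) :
    condEnt (mΓ.comap φ ⊔ invSigma G X) μ (fun i => f ⁻¹' {i}) =
      ∫⁻ x, condEnt (mΓ.comap φ ⊔ invSigma G X) (π x) (fun i => f ⁻¹' {i}) ∂μ := by
  obtain ⟨D, hD, hD01, hCE⟩ := R8.ent (G := G) (R8.kM X) φ hφ (fun _ => f) (hf.comp measurable_snd)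
  let p : X → R8.M X := fun x => ⟨π x, (hπ.2.1 x).1⟩
  have hp : @Measurable _ _ (invSigma G X) _ p :=
    @Measurable.subtype_mk _ _ (invSigma G X) _ _ _ (R8.pi_inv μ π hπ) _
  let d : X → ℕ → ℝ := fun x i => D (p x, φ x) i
  have hle : mΓ.comap φ ⊔ invSigma G X ≤ mX := sup_le hφ.comap_le R8.invSigma_le
  have hdm : ∀ i, @Measurable _ _ (mΓ.comap φ ⊔ invSigma G X) _ (fun x => d x i) := by
    intro i
    have h1 : @Measurable _ _ (mΓ.comap φ ⊔ invSigma G X) _ p := hp.mono le_sup_right le_rfl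
    have h2 : @Measurable _ _ (mΓ.comap φ ⊔ invSigma G X) _ φ :=
      (comap_measurable φ).mono le_sup_left le_rfl
    exact (hD i).comp (h1.prodMk h2)
  have hloc : ∀ x i, (π x)[(f ⁻¹' {i}).indicator (fun _ => (1 : ℝ)) | mΓ.comap φ ⊔ invSigma G X]
      =ᵐ[π x] fun y => d y i := by
    intro x i
    refine (hCE (p x) (hπ.2.1 x).2.2 i).trans ?_
    filter_upwards [R8.pi_ae μ π hπ x] with y hy
    have : p y = p x := Subtype.ext hy
    simp only [d, this]
  rw [R8.condEnt_eq _ μ _ d fun i => R8.glob_condExp μ π hπ φ hφ _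
    (hf (measurableSet_singleton i)) _ (hdm i) (fun x => hD01 _ _) (fun x => hloc x i),
    R8.lint μ π hπ _ (R8.measurable_eta d fun i => (hdm i).mono hle le_rfl)]
  apply lintegral_congr
  intro x
  rw [R8.condEnt_eq _ (π x) _ d (hloc x)]

theorem R8.glob_subset {G X Γ : Type*} [Group G] [Countable G] [MulAction G X]
    [mX : MeasurableSpace X]
    [MeasurableSpace.CountablyGenerated X] [mΓ : MeasurableSpace Γ]
    [MeasurableSpace.CountablyGenerated Γ]
    (μ : Measure X) (π : X → Measure X) (hπ : IsErgDecomp G μ π)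
    (hact : ∀ g : G, Measurable (fun x : X => g • x))
    (φ : X → Γ) (hφ : Measurable φ) (f : X → ℕ) (hf : Measurable f)
    (ξ : Set (Set X)) (hξm : ∀ A ∈ ξ, MeasurableSet A)
    (h : ∀ᵐ x ∂μ, SubsetMod (sigmaG G (range fun i => f ⁻¹' {i}) ⊔ mΓ.comap φ) (π x) ξ) :
    SubsetMod (sigmaG G (range fun i => f ⁻¹' {i}) ⊔ mΓ.comap φ ⊔ invSigma G X) μ ξ := by
  classical
  rw [R8.comap_theta] at h ⊢
  let θ : X → Γ × (G → ℕ) := fun x => (φ x, fun g : G => f (g • x))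
  have hθ : Measurable θ :=
    hφ.prodMk (measurable_pi_lambda _ fun g => hf.comp (hact g))
  intro A hA
  have hAm := hξm A hA
  let u : X → ℕ := fun x => if x ∈ A then 1 else 0
  have hu : Measurable u := Measurable.ite hAm measurable_const measurable_const
  have huA : u ⁻¹' {1} = A := by
    ext x; simp [u]
  obtain ⟨D, hD, hD01, hCE⟩ := R8.condK (R8.kM X) (fun _ => θ) (hθ.comp measurable_snd)
    (fun _ => u) (hu.comp measurable_snd)
  let p : X → R8.M X := fun x => ⟨π x, (hπ.2.1 x).1⟩
  have hp : @Measurable _ _ (invSigma G X) _ p :=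
    @Measurable.subtype_mk _ _ (invSigma G X) _ _ _ (R8.pi_inv μ π hπ) _
  have hle : (MeasurableSpace.comap θ inferInstance ⊔ invSigma G X) ≤ mX := sup_le hθ.comap_le R8.invSigma_le
  have hdm : @Measurable _ _ (MeasurableSpace.comap θ inferInstance ⊔ invSigma G X) _ (fun x => D (p x, θ x) 1) := by
    have h1 : @Measurable _ _ (MeasurableSpace.comap θ inferInstance ⊔ invSigma G X) _ p := hp.mono le_sup_right le_rfl
    have h2 : @Measurable _ _ (MeasurableSpace.comap θ inferInstance ⊔ invSigma G X) _ θ := (comap_measurable θ).mono le_sup_left le_rfl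
    exact (hD 1).comp (h1.prodMk h2)
  refine ⟨(fun x => D (p x, θ x) 1) ⁻¹' {1}, hdm (measurableSet_singleton 1), ?_⟩
  have hBm : MeasurableSet[mX] ((fun x => D (p x, θ x) 1) ⁻¹' {1}) :=
    hle _ (hdm (measurableSet_singleton 1))
  rw [hπ.2.2.2.2 _ (hAm.symmDiff hBm)]
  refine lintegral_eq_zero_of_ae_eq_zero ?_
  filter_upwards [h] with x hx
  haveI := (hπ.2.1 x).1
  have h1 := (R8.subset_iff_condExp _ (π x) hθ.comap_le A).1 (hx A hA)
  have h2 := hCE (p x) 1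
  rw [huA] at h2
  change (π x) _ = (0 : ℝ≥0∞)
  rw [measure_symmDiff_eq_zero_iff]
  filter_upwards [h1, h2, R8.pi_ae μ π hπ x] with y hy1 hy2 hy3
  apply propext
  change y ∈ A ↔ y ∈ (fun x => D (p x, θ x) 1) ⁻¹' {1}
  have : p y = p x := Subtype.ext hy3
  rw [mem_preimage, mem_singleton_iff, this, ← hy2]
  have hy1' : ((R8.kM X) (p x))[A.indicator (fun _ => (1 : ℝ)) | MeasurableSpace.comap θ inferInstance] y
    = A.indicator (fun _ => (1 : ℝ)) y := hy1
  rw [hy1']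
  by_cases hyA : y ∈ A <;> simp [hyA]

end Glob

section Main
open Filter Topology ProbabilityTheory

theorem R8.meas_ent {G X Γ P : Type*} [Group G] [MulAction G X] [mX : MeasurableSpace X]
    [mΓ : MeasurableSpace Γ] [MeasurableSpace.CountablyGenerated Γ] [MeasurableSpace P]
    (φ : X → Γ) (hφ : Measurable φ)
    (c : P → X → ℕ) (hc : Measurable (fun q : P × X => c q.1 q.2)) :
    ∃ e : R8.M X × P → ℝ≥0∞, Measurable e ∧ ∀ t, IsErgodicInv G t.1.1 →
      e t = condEnt (mΓ.comap φ ⊔ invSigma G X) t.1.1 (fun i => (c t.2) ⁻¹' {i}) := by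
  let κ : Kernel (R8.M X × P) X := (R8.kM X).comap Prod.fst measurable_fst
  obtain ⟨D, hD, hD01, hCE⟩ := R8.ent (G := G) κ φ hφ (fun t => c t.2)
    (hc.comp ((measurable_snd.comp measurable_fst).prodMk measurable_snd))
  refine ⟨fun t => ∫⁻ x, R8.eta (D (t, φ x)) ∂(κ t), ?_, ?_⟩
  · have h1 : Measurable (fun q : (R8.M X × P) × X => R8.eta (D (q.1, φ q.2))) :=
      R8.measurable_eta (fun q : (R8.M X × P) × X => D (q.1, φ q.2))
        fun i => (hD i).comp (measurable_fst.prodMk (hφ.comp measurable_snd))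
    exact Measurable.lintegral_kernel_prod_right h1
  · intro t ht
    exact (R8.condEnt_eq _ t.1.1 _ (fun x => D (t, φ x)) (hCE t ht)).symm

theorem R8.meas_good {G X Γ P : Type*} [Group G] [Countable G] [MulAction G X]
    [mX : MeasurableSpace X]
    [mΓ : MeasurableSpace Γ] [MeasurableSpace.CountablyGenerated Γ] [MeasurableSpace P]
    (hact : ∀ g : G, Measurable (fun x : X => g • x))
    (φ : X → Γ) (hφ : Measurable φ)
    (c : P → X → ℕ) (hc : Measurable (fun q : P × X => c q.1 q.2))
    (ξ : Set (Set X)) (hξc : ξ.Countable) (hξm : ∀ A ∈ ξ, MeasurableSet A) :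
    MeasurableSet {t : R8.M X × P |
      SubsetMod (sigmaG G (range fun i => (c t.2) ⁻¹' {i}) ⊔ mΓ.comap φ) t.1.1 ξ} := by
  classical
  let κ : Kernel (R8.M X × P) X := (R8.kM X).comap Prod.fst measurable_fst
  let θ : R8.M X × P → X → Γ × (G → ℕ) := fun t x => (φ x, fun g => c t.2 (g • x))
  have hθ : Measurable (fun q : (R8.M X × P) × X => θ q.1 q.2) := by
    refine (hφ.comp measurable_snd).prodMk (measurable_pi_lambda _ fun g => ?_)
    exact hc.comp ((measurable_snd.comp measurable_fst).prodMk ((hact g).comp measurable_snd))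
  have hθt : ∀ t, Measurable (θ t) := fun t => hθ.comp (measurable_const.prodMk measurable_id)
  have hset : {t : R8.M X × P |
      SubsetMod (sigmaG G (range fun i => (c t.2) ⁻¹' {i}) ⊔ mΓ.comap φ) t.1.1 ξ} =
      ⋂ A ∈ ξ, {t | ∃ B, MeasurableSet[MeasurableSpace.comap (θ t) inferInstance] B ∧
        t.1.1 (A ∆ B) = 0} := by
    ext t
    rw [mem_ofPred_eq, R8.comap_theta, mem_iInter₂]
    rfl
  rw [hset]
  refine MeasurableSet.biInter hξc fun A hA => ?_
  have hAm := hξm A hA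
  let u : X → ℕ := fun x => if x ∈ A then 1 else 0
  have hu : Measurable u := Measurable.ite hAm measurable_const measurable_const
  have huA : u ⁻¹' {1} = A := by
    ext x; simp [u]
  obtain ⟨D, hD, hD01, hCE⟩ := R8.condK κ θ hθ (fun _ => u) (hu.comp measurable_snd)
  let W : Set ((R8.M X × P) × X) :=
    {q | D (q.1, θ q.1 q.2) 1 ≠ A.indicator (fun _ => (1 : ℝ)) q.2}
  have hW : MeasurableSet W := by
    have h1 : Measurable (fun q : (R8.M X × P) × X => D (q.1, θ q.1 q.2) 1) :=
      (hD 1).comp (measurable_fst.prodMk hθ)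
    have h2 : Measurable (fun q : (R8.M X × P) × X => A.indicator (fun _ => (1 : ℝ)) q.2) :=
      (measurable_const.indicator hAm).comp measurable_snd
    exact (measurableSet_eq_fun h1 h2).compl
  have h3 : Measurable (fun t => κ t (Prod.mk t ⁻¹' W)) := Kernel.measurable_kernel_prodMk_left hW
  convert h3 (measurableSet_singleton 0) using 1
  ext t
  rw [mem_ofPred_eq, mem_preimage, mem_singleton_iff]
  haveI : IsProbabilityMeasure t.1.1 := t.1.2
  rw [R8.subset_iff_condExp _ t.1.1 (hθt t).comap_le A]
  have h4 := hCE t 1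
  rw [huA] at h4
  have h5 : (κ t (Prod.mk t ⁻¹' W) = 0) ↔
      (fun x => D (t, θ t x) 1) =ᵐ[κ t] A.indicator (fun _ => (1 : ℝ)) := Iff.rfl
  rw [h5]
  exact ⟨fun h => h4.symm.trans h, fun h => h4.trans h⟩

theorem R8.rok_eq {G X Γ P : Type*} [Group G] [Countable G] [MulAction G X]
    [mX : MeasurableSpace X]
    [mΓ : MeasurableSpace Γ]
    (φ : X → Γ) (c : P → X → ℕ) (hc : ∀ p, Measurable (c p))
    (ξ : Set (Set X))
    (ν : Measure X) [IsProbabilityMeasure ν] (hpm : IsPmp G ν) (her : IsErgodicInv G ν)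
    (hcod : ∀ f : X → ℕ, Measurable f → ∃ p, c p =ᵐ[ν] f) :
    outerRokhlin G ξ (mΓ.comap φ) ν = ⨅ p, ⨅ (_ : SubsetMod
      (sigmaG G (range fun i => (c p) ⁻¹' {i}) ⊔ mΓ.comap φ) ν ξ),
        condEnt (mΓ.comap φ ⊔ invSigma G X) ν (fun i => (c p) ⁻¹' {i}) := by
  apply le_antisymm
  · refine le_iInf₂ fun p hp => sInf_le ⟨_, R8.isPartition_fun _ (hc p), ?_, rfl⟩
    exact (R8.subsetMod_erg _ ν her ξ).2 hp
  · refine le_sInf ?_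
    rintro _ ⟨α, hα, hs, rfl⟩
    obtain ⟨f, hf, rfl⟩ := R8.exists_fun α hα
    obtain ⟨p, hp⟩ := hcod f hf
    rw [← R8.condEnt_congr _ ν _ _ hp]
    refine iInf₂_le p ?_
    exact R8.subsetMod_congr ν hpm φ _ _ hp.symm ξ ((R8.subsetMod_erg _ ν her ξ).1 hs)

theorem R8.gen_comap {X : Type*} (F : MeasurableSpace X) (h : CountablyGen F) :
    ∃ φ : X → (ℕ → Prop), F = MeasurableSpace.comap φ inferInstance := by
  obtain ⟨S, hS, rfl⟩ := h
  have hne : (insert ∅ S).Nonempty := ⟨∅, mem_insert _ _⟩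
  obtain ⟨e, he⟩ := (hS.insert ∅).exists_eq_range hne
  refine ⟨fun x n => x ∈ e n, ?_⟩
  have h1 : MeasurableSpace.generateFrom S = MeasurableSpace.generateFrom (insert ∅ S) := by
    rw [MeasurableSpace.generateFrom_insert_empty]
  rw [h1, he]
  apply le_antisymm
  · apply MeasurableSpace.generateFrom_le
    rintro _ ⟨n, rfl⟩
    refine ⟨{q | q n}, ?_, rfl⟩
    have : Measurable (fun q : ℕ → Prop => q n) := measurable_pi_apply n
    exact measurableSet_setOfPred.2 this
  · rw [← measurable_iff_comap_le]
    refine @measurable_pi_lambda _ _ _ (_) _ _ fun n => ?_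
    exact @measurableSet_setOfPred _ (_) _ |>.1 (MeasurableSpace.measurableSet_generateFrom ⟨n, rfl⟩)

end Main

section Main2
open Filter Topology ProbabilityTheory

theorem R8.opt {X Y P : Type*} [MeasurableSpace X] [StandardBorelSpace X]
    [TopologicalSpace P] [PolishSpace P] [MeasurableSpace P] [BorelSpace P] [Nonempty P]
    [TopologicalSpace Y] [TopologicalSpace.MetrizableSpace Y] [SecondCountableTopology Y]
    [MeasurableSpace Y] [BorelSpace Y]
    (μ : Measure X) [IsFiniteMeasure μ] (k : X → Y) (hk : Measurable k)
    (E : Set (X × P)) (hE : MeasurableSet E) (e : X × P → ℝ≥0∞) (he : Measurable e)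
    (hEk : ∀ x x' p, k x = k x' → (x, p) ∈ E → (x', p) ∈ E)
    (hek : ∀ x x' p, k x = k x' → e (x, p) = e (x', p)) :
    ∃ h : Y → ℝ≥0∞, Measurable h ∧
      (∀ᵐ y ∂(μ.map k), ∀ x, k x = y → h y = ⨅ p, ⨅ (_ : (x, p) ∈ E), e (x, p)) ∧
      ∀ ε : ℝ≥0∞, ε ≠ 0 → ∃ s : Y → P, Measurable s ∧ ∀ᵐ x ∂μ, h (k x) ≠ ∞ →
        (x, s (k x)) ∈ E ∧ e (x, s (k x)) ≤ h (k x) + ε := by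
  let R : Y → ℝ≥0∞ := fun y => ⨅ (q : X × P) (_ : k q.1 = y) (_ : q ∈ E), e q
  have hR : ∀ x, R (k x) = ⨅ p, ⨅ (_ : (x, p) ∈ E), e (x, p) := by
    intro x
    apply le_antisymm
    · refine le_iInf₂ fun p hp => ?_
      exact iInf_le_of_le (x, p) (iInf₂_le rfl hp)
    · refine le_iInf fun q => le_iInf₂ fun h1 h2 => ?_
      obtain ⟨x', p⟩ := q
      rw [hek x' x p h1]
      exact iInf₂_le p (hEk x' x p h1 h2)
  have hRn : NullMeasurable R (μ.map k) := by
    have : @Measurable (NullMeasurableSpace Y (μ.map k)) _ _ _ R := by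
      refine measurable_of_Iio fun r => ?_
      have hset : R ⁻¹' Iio r = (fun q : X × P => k q.1) '' (E ∩ e ⁻¹' Iio r) := by
        ext y
        simp only [mem_preimage, mem_Iio, R, iInf_lt_iff, mem_image, mem_inter_iff]
        constructor
        · rintro ⟨q, h1, h2, h3⟩
          exact ⟨q, ⟨h2, h3⟩, h1⟩
        · rintro ⟨q, ⟨h2, h3⟩, h1⟩
          exact ⟨q, h1, h2, h3⟩
      have : AnalyticSet (R ⁻¹' Iio r) := by
        rw [hset]
        exact (hE.inter (he measurableSet_Iio)).analyticSet_image (hk.comp measurable_fst)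
      have h' : NullMeasurableSet (R ⁻¹' Iio r) (μ.map k) := R8.nullMeasurable_analytic _ this
      exact h'
    exact this
  have hRa : AEMeasurable R (μ.map k) := hRn.aemeasurable
  refine ⟨hRa.mk R, hRa.measurable_mk, ?_, ?_⟩
  · filter_upwards [hRa.ae_eq_mk] with y hy x hx
    rw [← hy, ← hx, hR]
  · intro ε hε
    let h := hRa.mk R
    have hh : Measurable h := hRa.measurable_mk
    let E' : Set (X × P) := E ∩ {q | e q ≤ h (k q.1) + ε}
    have hE' : MeasurableSet E' :=
      hE.inter (measurableSet_le he ((hh.comp (hk.comp measurable_fst)).add_const ε))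
    have hA : AnalyticSet ((fun q : X × P => (k q.1, q.2)) '' E') :=
      hE'.analyticSet_image ((hk.comp measurable_fst).prodMk measurable_snd)
    obtain ⟨s, hs, hsE⟩ := R8.selection (μ.map k) hA
    refine ⟨s, hs, ?_⟩
    filter_upwards [ae_of_ae_map hk.aemeasurable hsE,
      ae_of_ae_map hk.aemeasurable hRa.ae_eq_mk] with x hx1 hx2 hx3
    have h1 : R (k x) = h (k x) := hx2
    have h2 : ∃ p, (k x, p) ∈ (fun q : X × P => (k q.1, q.2)) '' E' := by
      have h3 : R (k x) < h (k x) + ε := by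
        rw [h1]
        exact ENNReal.lt_add_right hx3 hε
      rw [hR] at h3
      simp only [iInf_lt_iff] at h3
      obtain ⟨p, hp, hlt⟩ := h3
      exact ⟨p, (x, p), ⟨hp, hlt.le⟩, rfl⟩
    obtain ⟨⟨x', p⟩, ⟨hm1, hm2⟩, heq⟩ := hx1 h2
    have e1 : k x' = k x := congrArg Prod.fst heq
    have e2 : p = s (k x) := congrArg Prod.snd heq
    subst e2
    refine ⟨hEk _ _ _ e1 hm1, ?_⟩
    rw [mem_ofPred_eq] at hm2
    rw [← hek _ _ _ e1]
    change e (x', s (k x)) ≤ h (k x) + ε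
    have : e (x', s (k x)) ≤ h (k x') + ε := hm2
    rwa [e1] at this

end Main2

section Main3
open Filter Topology ProbabilityTheory

theorem R8.range_ae {G X : Type*} [Group G] [MulAction G X] [mX : MeasurableSpace X]
    [MeasurableSpace.CountablyGenerated X]
    (μ : Measure X) (π : X → Measure X) (hπ : IsErgDecomp G μ π)
    (j : Measure X → (ℕ → ℝ≥0∞)) (hj : Measurable j)
    (hinj : ∀ ν ν' : Measure X, IsProbabilityMeasure ν → IsProbabilityMeasure ν' →
      j ν = j ν' → ν = ν') :
    ∀ᵐ ν ∂(μ.map π), ∃ x, π x = ν := by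
  let W : Set (R8.M X × X) := {q | j (π q.2) = j q.1.1}
  have hW : MeasurableSet W :=
    measurableSet_eq_fun (hj.comp (hπ.1.comp measurable_snd))
      (hj.comp (measurable_subtype_coe.comp measurable_fst))
  have hm : Measurable (fun t => R8.kM X t (Prod.mk t ⁻¹' W)) :=
    Kernel.measurable_kernel_prodMk_left hW
  have hprob : MeasurableSet {ν : Measure X | IsProbabilityMeasure ν} := by
    have : {ν : Measure X | IsProbabilityMeasure ν} = (fun ν => ν univ) ⁻¹' {1} := by
      ext ν
      rw [mem_ofPred_eq, mem_preimage, mem_singleton_iff]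
      exact ⟨fun h => h.measure_univ, fun h => ⟨h⟩⟩
    rw [this]
    exact Measure.measurable_coe MeasurableSet.univ (measurableSet_singleton 1)
  have hV := MeasurableSet.subtype_image hprob (hm (measurableSet_singleton 1))
  have hae : ∀ᵐ ν ∂(μ.map π), ν ∈ (Subtype.val '' ((fun t => R8.kM X t (Prod.mk t ⁻¹' W)) ⁻¹' {1}) :
      Set (Measure X)) := by
    refine (ae_map_iff (p := fun ν => ν ∈ (Subtype.val '' ((fun t => R8.kM X t (Prod.mk t ⁻¹' W)) ⁻¹' {1}) :
      Set (Measure X))) hπ.1.aemeasurable hV).2 ?_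
    refine Eventually.of_forall fun x => ?_
    refine ⟨⟨π x, (hπ.2.1 x).1⟩, ?_, rfl⟩
    rw [mem_preimage, mem_singleton_iff]
    haveI := (hπ.2.1 x).1
    change (π x) _ = 1
    refine Eq.trans (measure_congr ?_) (measure_univ (μ := π x))
    filter_upwards [R8.pi_ae μ π hπ x] with y hy
    apply propext
    change j (π y) = j (π x) ↔ y ∈ univ
    simp [hy]
  filter_upwards [hae] with ν hν
  obtain ⟨t, ht, rfl⟩ := hν
  rw [mem_preimage, mem_singleton_iff] at ht
  have hne : (Prod.mk t ⁻¹' W).Nonempty := by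
    rw [nonempty_iff_ne_empty]
    intro h0
    rw [h0] at ht
    simp at ht
  obtain ⟨x, hx⟩ := hne
  exact ⟨x, hinj _ _ (hπ.2.1 x).1 t.2 hx⟩

theorem R8.main {G X : Type*} (F : MeasurableSpace X) [Group G] [Countable G]
    [mX : MeasurableSpace X] [StandardBorelSpace X] [MulAction G X]
    (μ : Measure X) [IsProbabilityMeasure μ] (hpmp : IsPmp G μ)
    (ξ : Set (Set X)) (hξc : ξ.Countable) (hξm : ∀ A ∈ ξ, MeasurableSet A)
    (hF : F ≤ mX) (hFcg : CountablyGen F)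
    (π : X → Measure X) (hπ : IsErgDecomp G μ π) :
    ∃ h : Measure X → ℝ≥0∞, Measurable h ∧
      (∀ᵐ ν ∂(μ.map π), h ν = outerRokhlin G ξ F ν) ∧
      outerRokhlin G ξ F μ = ∫⁻ ν, h ν ∂(μ.map π) := by
  obtain ⟨φ, rfl⟩ := R8.gen_comap F hFcg
  have hφ : Measurable φ := measurable_iff_comap_le.2 hF
  have hact : ∀ g : G, Measurable (fun x : X => g • x) := fun g => (hpmp g).measurable
  obtain ⟨c, hc, hcod⟩ := R8.coding (X := X)
  have hcp : ∀ p, Measurable (c p) := fun p => hc.comp (measurable_const.prodMk measurable_id)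
  obtain ⟨j, hj, hinj⟩ := R8.iota X
  obtain ⟨e, he, hee⟩ := R8.meas_ent (G := G) φ hφ c hc
  have hgood := R8.meas_good hact φ hφ c hc ξ hξc hξm
  let p : X → R8.M X := fun x => ⟨π x, (hπ.2.1 x).1⟩
  have hp : Measurable p := hπ.1.subtype_mk
  have hpp : Measurable (fun q : X × (ℕ → ℕ → ℕ) => (p q.1, q.2)) :=
    (hp.comp measurable_fst).prodMk measurable_snd
  let E : Set (X × (ℕ → ℕ → ℕ)) := {q | SubsetMod
    (sigmaG G (range fun i => (c q.2) ⁻¹' {i}) ⊔ MeasurableSpace.comap φ inferInstance) (π q.1) ξ}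
  have hE : MeasurableSet E := hpp hgood
  have hkk : ∀ x x', j (π x) = j (π x') → π x = π x' := fun x x' h =>
    hinj _ _ (hπ.2.1 x).1 (hπ.2.1 x').1 h
  have hkp : ∀ x x', j (π x) = j (π x') → p x = p x' := fun x x' h => Subtype.ext (hkk x x' h)
  obtain ⟨h0, hh0, h0R, hsel⟩ := R8.opt μ (fun x => j (π x)) (hj.comp hπ.1) E hE
    (fun q => e (p q.1, q.2)) (he.comp hpp)
    (fun x x' q hxx hq => by
      change SubsetMod _ (π x') ξ
      rw [← hkk x x' hxx]; exact hq)
    (fun x x' q hxx => by simp only [hkp x x' hxx])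
  have hrok : ∀ x, outerRokhlin G ξ (MeasurableSpace.comap φ inferInstance) (π x) =
      ⨅ q, ⨅ (_ : (x, q) ∈ E), e (p x, q) := by
    intro x
    haveI := (hπ.2.1 x).1
    rw [R8.rok_eq φ c hcp ξ (π x) (hπ.2.1 x).2.1 (hπ.2.1 x).2.2 (fun f hf => hcod (π x) f hf)]
    refine iInf_congr fun q => iInf_congr fun _ => ?_
    exact (hee (p x, q) (hπ.2.1 x).2.2).symm
  have hmain : ∀ᵐ ν ∂(μ.map π), h0 (j ν) =
      outerRokhlin G ξ (MeasurableSpace.comap φ inferInstance) ν := by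
    have h1 : μ.map (fun x => j (π x)) = (μ.map π).map j := (Measure.map_map hj hπ.1).symm
    rw [h1] at h0R
    filter_upwards [ae_of_ae_map hj.aemeasurable h0R, R8.range_ae μ π hπ j hj hinj] with ν h2 h3
    obtain ⟨x, rfl⟩ := h3
    rw [hrok x]
    exact h2 x rfl
  have hmain' := ae_of_ae_map hπ.1.aemeasurable hmain
  refine ⟨fun ν => h0 (j ν), hh0.comp hj, hmain, ?_⟩
  rw [lintegral_map (f := fun ν => h0 (j ν)) (hh0.comp hj) hπ.1]
  apply le_antisymm
  · refine ENNReal.le_of_forall_pos_le_add fun ε hε hfin => ?_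
    obtain ⟨s, hs, hsE⟩ := hsel ε (by simpa using hε.ne')
    have hlt := ae_lt_top ((hh0.comp hj).comp hπ.1) hfin.ne
    let f : X → ℕ := fun x => c (s (j (π x))) x
    have hf : Measurable f := hc.comp ((hs.comp (hj.comp hπ.1)).prodMk measurable_id)
    have hfx : ∀ x, c (s (j (π x))) =ᵐ[π x] f := by
      intro x
      filter_upwards [R8.pi_ae μ π hπ x] with y hy
      simp only [f, hy]
    have hadm : SubsetMod (sigmaG G (range fun i => f ⁻¹' {i}) ⊔
        MeasurableSpace.comap φ inferInstance ⊔ invSigma G X) μ ξ := by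
      refine R8.glob_subset μ π hπ hact φ hφ f hf ξ hξm ?_
      filter_upwards [hsE, hlt] with x h1 h2
      exact R8.subsetMod_congr (π x) (hπ.2.1 x).2.1 φ _ _ (hfx x) ξ (h1 h2.ne).1
    have hle1 : outerRokhlin G ξ (MeasurableSpace.comap φ inferInstance) μ ≤
        condEnt (MeasurableSpace.comap φ inferInstance ⊔ invSigma G X) μ (fun i => f ⁻¹' {i}) :=
      sInf_le ⟨_, R8.isPartition_fun f hf, hadm, rfl⟩
    refine hle1.trans ?_
    rw [R8.glob_ent μ π hπ φ hφ f hf]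
    calc _ ≤ ∫⁻ x, (h0 (j (π x)) + ε) ∂μ := by
          apply lintegral_mono_ae
          filter_upwards [hsE, hlt] with x h1 h2
          rw [← R8.condEnt_congr _ (π x) _ _ (hfx x)]
          exact (hee (p x, s (j (π x))) (hπ.2.1 x).2.2).symm.le.trans (h1 h2.ne).2
      _ = _ := by
          rw [lintegral_add_right _ measurable_const]
          simp
  · refine le_sInf ?_
    rintro _ ⟨α, hα, hs, rfl⟩
    obtain ⟨f, hf, rfl⟩ := R8.exists_fun α hα
    rw [R8.glob_ent μ π hπ φ hφ f hf]
    apply lintegral_mono_ae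
    have hs' : ∀ᵐ x ∂μ, SubsetMod (sigmaG G (range fun i => f ⁻¹' {i}) ⊔
        MeasurableSpace.comap φ inferInstance ⊔ invSigma G X) (π x) ξ := by
      have : ∀ A ∈ ξ, ∀ᵐ x ∂μ, ∃ B, MeasurableSet[sigmaG G (range fun i => f ⁻¹' {i}) ⊔
          MeasurableSpace.comap φ inferInstance ⊔ invSigma G X] B ∧ (π x) (A ∆ B) = 0 := by
        intro A hA
        obtain ⟨B, hB, hAB⟩ := hs A hA
        have hle : sigmaG G (range fun i => f ⁻¹' {i}) ⊔
            MeasurableSpace.comap φ inferInstance ⊔ invSigma G X ≤ mX := by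
          refine sup_le (sup_le (MeasurableSpace.generateFrom_le ?_) hφ.comap_le) R8.invSigma_le
          rintro _ ⟨g, _, ⟨i, rfl⟩, rfl⟩
          exact hact g (hf (measurableSet_singleton i))
        have hm : MeasurableSet (A ∆ B) := (hξm A hA).symmDiff (hle B hB)
        rw [hπ.2.2.2.2 _ hm, lintegral_eq_zero_iff (f := fun x => π x (A ∆ B)) ((Measure.measurable_coe hm).comp hπ.1)] at hAB
        filter_upwards [hAB] with x hx
        exact ⟨B, hB, hx⟩
      exact (ae_ball_iff hξc).2 this
    filter_upwards [hmain', hs'] with x h1 h2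
    change h0 (j (π x)) ≤ _
    rw [h1]
    exact sInf_le ⟨_, R8.isPartition_fun f hf, h2, rfl⟩

end Main3

/-- Corollary 4.5, ergodic decomposition formula: the outer Rokhlin
entropy is the integral over the ergodic decomposition of the outer Rokhlin entropies of
the ergodic components. -/
theorem statement8 {G X : Type*} (F : MeasurableSpace X) [Group G] [Countable G]
    [mX : MeasurableSpace X] [StandardBorelSpace X] [MulAction G X]
    (μ : Measure X) [IsProbabilityMeasure μ] (hpmp : IsPmp G μ)
    (ξ : Set (Set X)) (hξc : ξ.Countable) (hξm : ∀ A ∈ ξ, MeasurableSet A)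
    (hF : F ≤ mX) (hFinv : InvariantAlg G F) (hFcg : CountablyGen F)
    (π : X → Measure X) (hπ : IsErgDecomp G μ π) :
    ∃ h : Measure X → ℝ≥0∞, Measurable h ∧
      (∀ᵐ ν ∂(μ.map π), h ν = outerRokhlin G ξ F ν) ∧
      outerRokhlin G ξ F μ = ∫⁻ ν, h ν ∂(μ.map π) := by
  exact R8.main F μ hpmp ξ hξc hξm hF hFcg π hπ
end
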